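/- arXiv:2005.08201 — 3 statements merged into one kernel-verified Lean document; each statement's English description precedes it below -/
import Mathlib

section
/- Let F_q be a finite field of odd characteristic p with q = p^n elements. If q ≡ -1 (mod 8) or q ≡ -3 (mod 8), then the group algebra F_q[QD_16] is isomorphic as an F_q-algebra to F_q ⊕ F_q ⊕ F_q ⊕ F_q ⊕ M(2,F_q) ⊕ M(2,F_{q^2}), where F_{q^2} is the field with q^2 elements. -/
/-- Relations for the quasidihedral group `QD_{2^k}`:
`a^(2^(k-1)) = 1`, `x^2 = 1`, `x * a * x = a^(2^(k-2)-1)`. -/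
def qdRels (k : ℕ) : Set (FreeGroup (Fin 2)) :=
  {FreeGroup.of 0 ^ (2 ^ (k - 1)), FreeGroup.of 1 ^ 2,
    FreeGroup.of 1 * FreeGroup.of 0 * FreeGroup.of 1 * (FreeGroup.of 0 ^ (2 ^ (k - 2) - 1))⁻¹}

/-- The quasidihedral group of order 16: `⟨a, x | a^8 = x^2 = 1, x a x = a^3⟩`. -/
def QD16 : Type := PresentedGroup (qdRels 4)

instance : Group QD16 := inferInstanceAs (Group (PresentedGroup (qdRels 4)))

/-!
Over a commutative ring `R` in which `2` is invertible, `QD16` has four linear characters and acts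
on two free quadratic algebras: on `R[i]` with `a = i` and `x` the conjugation, and, over
`K = R[√-2]`, on `K[ζ]` with `ζ ^ 4 = -1` and `ζ + ζ ^ 3 = √-2`, with `a = ζ` and
`x : ζ ↦ ζ ^ 3`. Since `K` is spanned by `1` and the trace `√-2` of `ζ`, both actions fill out the
full matrix algebra as soon as the discriminants `-4` and `2` are units. The six representations are
separated pairwise by one of `a`, `x`, `a ^ 2`, `a ^ 4`, on which they take opposite values `±1`, so
by the Chinese remainder theorem `R[QD16]` maps onto the product. The product has rank `16` and
`QD16` has at most `16` elements, so this surjection is bijective. If `R` is the field with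
`q ≡ 5, 7 (mod 8)` elements, then `-2` is not a square and `K` is the field with `q ^ 2` elements.
-/

/-- A pair of elements of a monoid satisfying the defining relations of `QD16`. -/
structure IsQuasidihedralPair {M : Type*} [Monoid M] (A X : M) : Prop where
  pow_eight : A ^ 8 = 1
  sq : X ^ 2 = 1
  conj : X * A * X = A ^ 3

namespace QD16

/-- The generator `a` of the presentation of `QD16`. -/
def a : QD16 := PresentedGroup.of (rels := qdRels 4) 0

/-- The generator `x` of the presentation of `QD16`. -/
def x : QD16 := PresentedGroup.of (rels := qdRels 4) 1

lemma isQuasidihedralPair_a_x : IsQuasidihedralPair a x where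
  pow_eight := PresentedGroup.one_of_mem (rels := qdRels 4) (x := .of 0 ^ 8) (by simp [qdRels])
  sq := PresentedGroup.one_of_mem (rels := qdRels 4) (x := .of 1 ^ 2) (by simp [qdRels])
  conj := PresentedGroup.mk_eq_mk_of_mul_inv_mem (rels := qdRels 4)
    (x := .of 1 * .of 0 * .of 1) (y := FreeGroup.of 0 ^ 3) (by simp [qdRels])

lemma inv_a : a⁻¹ = a ^ 7 :=
  inv_eq_of_mul_eq_one_right (by rw [← pow_succ', isQuasidihedralPair_a_x.pow_eight])

lemma inv_x : x⁻¹ = x :=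
  inv_eq_of_mul_eq_one_right (by rw [← sq, isQuasidihedralPair_a_x.sq])

lemma semiconjBy_x_a : SemiconjBy x a (a ^ 3) := by
  rw [SemiconjBy, ← isQuasidihedralPair_a_x.conj, mul_assoc _ x x, ← sq,
    isQuasidihedralPair_a_x.sq, mul_one]

lemma closure_a_x : Subgroup.closure {a, x} = ⊤ :=
  eq_top_iff.mpr fun g _ ↦ PresentedGroup.generated_by (qdRels 4) (Subgroup.closure {a, x})
    (Fin.forall_fin_two.mpr
      ⟨Subgroup.subset_closure (.inl rfl), Subgroup.subset_closure (.inr rfl)⟩) g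

lemma exists_eq_a_pow_mul_x_pow (g : QD16) : ∃ i j : ℕ, g = a ^ i * x ^ j := by
  have x_mul (i j : ℕ) : x * (a ^ i * x ^ j) = a ^ (3 * i) * x ^ (j + 1) := by
    rw [← mul_assoc, (semiconjBy_x_a.pow_right i).eq, ← pow_mul, pow_succ' x, mul_assoc]
  have hg : g ∈ Subgroup.closure {a, x} := closure_a_x ▸ Subgroup.mem_top g
  induction hg using Subgroup.closure_induction_left with
  | one => exact ⟨0, 0, by simp only [pow_zero, mul_one]⟩
  | mul_left s hs y _ ih =>
    obtain ⟨i, j, rfl⟩ := ih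
    obtain rfl | rfl := hs
    · exact ⟨i + 1, j, by rw [pow_succ', mul_assoc]⟩
    · exact ⟨3 * i, j + 1, x_mul i j⟩
  | inv_mul_cancel s hs y _ ih =>
    obtain ⟨i, j, rfl⟩ := ih
    obtain rfl | rfl := hs
    · exact ⟨7 + i, j, by rw [pow_add, ← inv_a, mul_assoc]⟩
    · exact ⟨3 * i, j + 1, by rw [inv_x, x_mul]⟩

lemma surjective_a_pow_mul_x_pow :
    Function.Surjective fun t : Fin 8 × Fin 2 ↦ a ^ (t.1 : ℕ) * x ^ (t.2 : ℕ) := by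
  intro g
  obtain ⟨i, j, rfl⟩ := exists_eq_a_pow_mul_x_pow g
  refine ⟨(Fin.ofNat 8 i, Fin.ofNat 2 j), ?_⟩
  simp only [Fin.val_ofNat]
  rw [← pow_eq_pow_mod i isQuasidihedralPair_a_x.pow_eight,
    ← pow_eq_pow_mod j isQuasidihedralPair_a_x.sq]

instance : Finite QD16 := .of_surjective _ surjective_a_pow_mul_x_pow

lemma card_le_sixteen : Nat.card QD16 ≤ 16 := by
  simpa using Nat.card_le_card_of_surjective _ surjective_a_pow_mul_x_pow

section Lift

variable {M : Type*} [Monoid M] {A X : M}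

lemma exists_monoidHom (h : IsQuasidihedralPair A X) : ∃ φ : QD16 →* M, φ a = A ∧ φ x = X := by
  let A' : Mˣ := Units.ofPowEqOne A 8 h.pow_eight (by norm_num)
  let X' : Mˣ := Units.ofPowEqOne X 2 h.sq (by norm_num)
  have hrels : ∀ r ∈ qdRels 4, FreeGroup.lift ![A', X'] r = 1 := by
    rintro r (rfl | rfl | rfl)
    · ext; simp [A']
    · ext; simp [X']
    · have hconj : X' * A' * X' = A' ^ 3 := by ext; simpa [A', X'] using h.conj
      simp [hconj]
  exact ⟨(Units.coeHom M).comp (PresentedGroup.toGroup hrels),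
    congrArg Units.val (PresentedGroup.toGroup.of hrels (x := 0)),
    congrArg Units.val (PresentedGroup.toGroup.of hrels (x := 1))⟩

/-- The homomorphism out of `QD16` sending the generators to a given quasidihedral pair. -/
noncomputable def lift (h : IsQuasidihedralPair A X) : QD16 →* M := (exists_monoidHom h).choose

@[simp] lemma lift_a (h : IsQuasidihedralPair A X) : lift h a = A :=
  (exists_monoidHom h).choose_spec.1

@[simp] lemma lift_x (h : IsQuasidihedralPair A X) : lift h x = X :=
  (exists_monoidHom h).choose_spec.2

end Lift

end QD16

section Comaximal

variable {R A B C : Type*} [CommRing R] [Ring A] [Ring B] [Ring C]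
  [Algebra R A] [Algebra R B] [Algebra R C] {f : A →ₐ[R] B} {g : A →ₐ[R] C}

/-- Two algebra homomorphisms with the same source are comaximal if some element is sent to `1` by
the first and to `0` by the second; for surjective homomorphisms this says that the sum of the
kernels is the whole algebra, the hypothesis of the Chinese remainder theorem. -/
def Comaximal (f : A →ₐ[R] B) (g : A →ₐ[R] C) : Prop := ∃ e, f e = 1 ∧ g e = 0

namespace Comaximal

lemma prod_right {D : Type*} [Ring D] [Algebra R D] {h : A →ₐ[R] D} (hfg : Comaximal f g)
    (hfh : Comaximal f h) : Comaximal f (g.prod h) := by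
  obtain ⟨e, hfe, hge⟩ := hfg
  obtain ⟨e', hfe', hhe'⟩ := hfh
  exact ⟨e * e', by simp [hfe, hfe'], by simp [hge, hhe']⟩

lemma surjective_prod (hfg : Comaximal f g) (hf : Function.Surjective f)
    (hg : Function.Surjective g) : Function.Surjective (f.prod g) := by
  rintro ⟨b, c⟩
  obtain ⟨e, hfe, hge⟩ := hfg
  obtain ⟨y, rfl⟩ := hf b
  obtain ⟨z, rfl⟩ := hg c
  exact ⟨y * e + z * (1 - e), by simp [hfe, hge]⟩

lemma of_map_eq_one_of_map_eq_neg_one [Invertible (2 : R)] {y : A} (hf : f y = 1)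
    (hg : g y = -1) : Comaximal f g := by
  refine ⟨⅟(2 : R) • (1 + y), ?_, by simp [hg]⟩
  rw [map_smul, map_add, map_one, hf, smul_add, ← add_smul, invOf_two_add_invOf_two, one_smul]

end Comaximal

end Comaximal

section Companion

variable {K : Type*} [CommRing K]

/-- The matrix of multiplication by `α` on `K[α]`, where `α ^ 2 = t * α - d`, in the basis
`1, α`. -/
def companion (t d : K) : Matrix (Fin 2) (Fin 2) K := !![0, -d; 1, t]

/-- The matrix of the involution `α ↦ t - α` of `K[α]`, where `α ^ 2 = t * α - d`, in the basis
`1, α`. -/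
def conjugation (t : K) : Matrix (Fin 2) (Fin 2) K := !![1, t; 0, -1]

lemma companion_sq (t d : K) : companion t d ^ 2 = t • companion t d - d • 1 := by
  simp [companion, sq, Matrix.one_fin_two, neg_add_eq_sub, mul_comm]

lemma conjugation_sq (t : K) : conjugation t ^ 2 = 1 := by
  simp [conjugation, sq, Matrix.one_fin_two]

lemma conjugation_mul_companion_mul_conjugation (t d : K) :
    conjugation t * companion t d * conjugation t = t • 1 - companion t d := by
  simp [companion, conjugation, Matrix.one_fin_two]

lemma companion_pow_three {t d : K} (ht : t ^ 2 = d - 1) (htd : t * d = -t) :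
    companion t d ^ 3 = t • 1 - companion t d := by
  rw [pow_succ, companion_sq, sub_mul, smul_mul_assoc, smul_mul_assoc, ← sq, companion_sq, one_mul]
  linear_combination (norm := module) ht • companion t d - htd • (1 : Matrix (Fin 2) (Fin 2) K)

lemma companion_pow_four {t d : K} (ht : t ^ 2 = d - 1) (htd : t * d = -t) :
    companion t d ^ 4 = d • 1 := by
  rw [pow_succ, companion_pow_three ht htd, sub_mul, smul_mul_assoc, one_mul, ← sq, companion_sq,
    sub_sub_cancel]

lemma isQuasidihedralPair_companion_conjugation {t d : K} (ht : t ^ 2 = d - 1)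
    (htd : t * d = -t) (hd : d ^ 2 = 1) :
    IsQuasidihedralPair (companion t d) (conjugation t) where
  pow_eight := by
    rw [show 8 = 4 * 2 from rfl, pow_mul, companion_pow_four ht htd, smul_pow, hd, one_pow,
      one_smul]
  sq := conjugation_sq t
  conj := by
    rw [conjugation_mul_companion_mul_conjugation, companion_pow_three ht htd]

lemma exists_eq_add_smul_companion_add_smul_conjugation {t d : K} (hΔ : IsUnit (4 * d - t ^ 2))
    (M : Matrix (Fin 2) (Fin 2) K) :
    ∃ k₀ k₁ k₂ k₃ : K, M = k₀ • 1 + k₁ • companion t d + k₂ • conjugation t +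
      k₃ • (companion t d * conjugation t) := by
  obtain ⟨u, hu⟩ := hΔ.exists_right_inv
  let y := M 0 0 - M 1 1 + t * M 1 0
  let z := M 0 1 + d * M 1 0
  -- The coefficients solve `2 * k₂ + t * k₃ = y` and `t * k₂ + 2 * d * k₃ = z`.
  let k₂ := (2 * d * y - t * z) * u
  let k₃ := (2 * z - t * y) * u
  refine ⟨M 0 0 - k₂, M 1 0 - k₃, k₂, k₃, ?_⟩
  have upper_right : M 0 1 = (M 1 0 - k₃) * -d + k₂ * t + k₃ * d := by
    linear_combination -z * hu
  have lower_right : M 1 1 = M 0 0 - k₂ + (M 1 0 - k₃) * t + -k₂ := by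
    linear_combination y * hu
  ext i j
  fin_cases i <;> fin_cases j <;> simp [companion, conjugation, upper_right, lower_right]

lemma subalgebra_eq_top_of_companion_mem {R : Type*} [CommRing R] [Algebra R K] {t d : K}
    (hΔ : IsUnit (4 * d - t ^ 2)) {S : Subalgebra R (Matrix (Fin 2) (Fin 2) K)}
    (hA : companion t d ∈ S) (hX : conjugation t ∈ S) (hscalar : ∀ k : K, k • 1 ∈ S) : S = ⊤ := by
  refine eq_top_iff.mpr fun M _ ↦ ?_
  have smul_mem (k : K) {N : Matrix (Fin 2) (Fin 2) K} (hN : N ∈ S) : k • N ∈ S := by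
    simpa only [smul_one_mul] using S.mul_mem (hscalar k) hN
  obtain ⟨k₀, k₁, k₂, k₃, rfl⟩ := exists_eq_add_smul_companion_add_smul_conjugation hΔ M
  exact S.add_mem (S.add_mem (S.add_mem (hscalar k₀) (smul_mem k₁ hA)) (smul_mem k₂ hX))
    (smul_mem k₃ (S.mul_mem hA hX))

end Companion

namespace QD16

variable (R : Type*) [CommRing R]

section AlgLift

variable {B : Type*} [Ring B] [Algebra R B] {A X : B}

/-- The representation of `R[QD16]` in an `R`-algebra given by a quasidihedral pair. -/
noncomputable def algLift (h : IsQuasidihedralPair A X) : MonoidAlgebra R QD16 →ₐ[R] B :=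
  MonoidAlgebra.lift R B QD16 (lift h)

@[simp] lemma algLift_of_a (h : IsQuasidihedralPair A X) :
    algLift R h (MonoidAlgebra.of R QD16 a) = A := by
  rw [algLift, MonoidAlgebra.lift_of, lift_a]

@[simp] lemma algLift_of_x (h : IsQuasidihedralPair A X) :
    algLift R h (MonoidAlgebra.of R QD16 x) = X := by
  rw [algLift, MonoidAlgebra.lift_of, lift_x]

end AlgLift

lemma isQuasidihedralPair_intUnits (ε η : ℤˣ) :
    IsQuasidihedralPair ((ε : ℤ) : R) ((η : ℤ) : R) := by
  obtain rfl | rfl := Int.units_eq_one_or ε <;> obtain rfl | rfl := Int.units_eq_one_or η <;>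
    constructor <;> norm_num

/-- The linear character of `R[QD16]` sending the generators `a` and `x` to the signs `ε` and
`η`. -/
noncomputable def character (ε η : ℤˣ) : MonoidAlgebra R QD16 →ₐ[R] R :=
  algLift R (isQuasidihedralPair_intUnits R ε η)

lemma isQuasidihedralPair_companion_zero_one :
    IsQuasidihedralPair (companion (0 : R) 1) (conjugation 0) :=
  isQuasidihedralPair_companion_conjugation (by simp) (by simp) (by simp)

/-- The representation of `R[QD16]` on `R[i]`, with `a` acting as multiplication by `i` and `x` as
complex conjugation. -/
noncomputable def gaussianRep : MonoidAlgebra R QD16 →ₐ[R] Matrix (Fin 2) (Fin 2) R :=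
  algLift R (isQuasidihedralPair_companion_zero_one R)

section CyclotomicRep

variable {K : Type*} [CommRing K] [Algebra R K] {w : K}

lemma isQuasidihedralPair_companion_neg_one (hw : w ^ 2 = -2) :
    IsQuasidihedralPair (companion w (-1)) (conjugation w) :=
  isQuasidihedralPair_companion_conjugation (by linear_combination hw) (by ring) (by ring)

/-- The `K`-linear representation of `R[QD16]` on `K[ζ]`, where `ζ ^ 4 = -1` and
`ζ + ζ ^ 3 = w` is a square root of `-2` in `K`; the generator `a` acts as multiplication by `ζ`
and `x` as the `K`-linear automorphism `ζ ↦ ζ ^ 3`. -/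
noncomputable def cyclotomicRep (hw : w ^ 2 = -2) :
    MonoidAlgebra R QD16 →ₐ[R] Matrix (Fin 2) (Fin 2) K :=
  algLift R (isQuasidihedralPair_companion_neg_one hw)

lemma cyclotomicRep_surjective [Invertible (2 : R)] (b : Module.Basis (Fin 2) R K) (hb₀ : b 0 = 1)
    (hb₁ : b 1 ^ 2 = -2) : Function.Surjective (cyclotomicRep R hb₁) := by
  have hA : companion (b 1) (-1) ∈ (cyclotomicRep R hb₁).range := ⟨_, algLift_of_a R _⟩
  have hX : conjugation (b 1) ∈ (cyclotomicRep R hb₁).range := ⟨_, algLift_of_x R _⟩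
  have hw : b 1 • 1 ∈ (cyclotomicRep R hb₁).range := by
    have := add_mem (mul_mem (mul_mem hX hA) hX) hA
    rwa [conjugation_mul_companion_mul_conjugation, sub_add_cancel] at this
  have hdisc : IsUnit (4 * -1 - b 1 ^ 2) := by
    rw [hb₁, show (4 * -1 - -2 : K) = -algebraMap R K 2 by rw [map_ofNat]; norm_num]
    exact ((isUnit_of_invertible (2 : R)).map (algebraMap R K)).neg
  rw [← AlgHom.range_eq_top]
  refine subalgebra_eq_top_of_companion_mem hdisc hA hX fun k ↦ ?_
  rw [← b.sum_repr k, Fin.sum_univ_two, hb₀, add_smul, smul_assoc, smul_assoc, one_smul]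
  exact add_mem (Subalgebra.smul_mem _ (one_mem _) _) (Subalgebra.smul_mem _ hw _)

lemma cyclotomicRep_of_a_pow_four (hw : w ^ 2 = -2) :
    cyclotomicRep R hw (MonoidAlgebra.of R QD16 a ^ 4) = -1 := by
  rw [map_pow, cyclotomicRep, algLift_of_a,
    companion_pow_four (by linear_combination hw) (by ring), neg_one_smul]

end CyclotomicRep

lemma character_surjective (ε η : ℤˣ) : Function.Surjective (character R ε η) :=
  fun r ↦ ⟨algebraMap R _ r, AlgHom.commutes _ r⟩

lemma gaussianRep_surjective [Invertible (2 : R)] : Function.Surjective (gaussianRep R) := by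
  have hdisc : IsUnit (4 * 1 - 0 ^ 2 : R) := by
    rw [show (4 * 1 - 0 ^ 2 : R) = 2 * 2 by norm_num]
    exact (isUnit_of_invertible 2).mul (isUnit_of_invertible 2)
  rw [← AlgHom.range_eq_top]
  exact subalgebra_eq_top_of_companion_mem hdisc ⟨_, algLift_of_a R _⟩ ⟨_, algLift_of_x R _⟩
    fun r ↦ Subalgebra.smul_mem _ (one_mem _) r

lemma character_of_a_sq (ε η : ℤˣ) : character R ε η (MonoidAlgebra.of R QD16 a ^ 2) = 1 := by
  rw [map_pow, character, algLift_of_a, ← Int.cast_pow, ← Units.val_pow_eq_pow_val, Int.units_sq,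
    Units.val_one, Int.cast_one]

lemma gaussianRep_of_a_sq : gaussianRep R (MonoidAlgebra.of R QD16 a ^ 2) = -1 := by
  rw [map_pow, gaussianRep, algLift_of_a, companion_sq, zero_smul, one_smul, zero_sub]

section Comaximal

variable [Invertible (2 : R)] {K : Type*} [CommRing K] [Algebra R K] {w : K}

lemma comaximal_character {ε η ε' η' : ℤˣ} (h : (ε, η) ≠ (ε', η')) :
    Comaximal (character R ε η) (character R ε' η') := by
  have sign_mul_self (u : ℤˣ) : ((u : ℤ) : R) * (u : ℤ) = 1 := by
    rw [← Int.cast_mul, ← Units.val_mul, Int.units_mul_self, Units.val_one, Int.cast_one]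
  have sign_mul_of_ne {u v : ℤˣ} (huv : u ≠ v) : ((u : ℤ) : R) * (v : ℤ) = -1 := by
    rw [Int.units_ne_iff_eq_neg.mp huv, Units.val_neg, Int.cast_neg, neg_mul, sign_mul_self]
  by_cases hε : ε = ε'
  · have hη : η ≠ η' := fun hη ↦ h (Prod.ext hε hη)
    exact .of_map_eq_one_of_map_eq_neg_one (y := ((η : ℤ) : R) • MonoidAlgebra.of R QD16 x)
      (by rw [map_smul, character, algLift_of_x, smul_eq_mul, sign_mul_self])
      (by rw [map_smul, character, algLift_of_x, smul_eq_mul, sign_mul_of_ne hη])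
  · exact .of_map_eq_one_of_map_eq_neg_one (y := ((ε : ℤ) : R) • MonoidAlgebra.of R QD16 a)
      (by rw [map_smul, character, algLift_of_a, smul_eq_mul, sign_mul_self])
      (by rw [map_smul, character, algLift_of_a, smul_eq_mul, sign_mul_of_ne hε])

lemma comaximal_character_gaussianRep (ε η : ℤˣ) :
    Comaximal (character R ε η) (gaussianRep R) :=
  .of_map_eq_one_of_map_eq_neg_one (character_of_a_sq R ε η) (gaussianRep_of_a_sq R)

lemma comaximal_character_cyclotomicRep (ε η : ℤˣ) (hw : w ^ 2 = -2) :
    Comaximal (character R ε η) (cyclotomicRep R hw) :=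
  .of_map_eq_one_of_map_eq_neg_one
    (by rw [show 4 = 2 * 2 from rfl, pow_mul, map_pow, character_of_a_sq, one_pow])
    (cyclotomicRep_of_a_pow_four R hw)

lemma comaximal_gaussianRep_cyclotomicRep (hw : w ^ 2 = -2) :
    Comaximal (gaussianRep R) (cyclotomicRep R hw) :=
  .of_map_eq_one_of_map_eq_neg_one
    (by rw [show 4 = 2 * 2 from rfl, pow_mul, map_pow, gaussianRep_of_a_sq, neg_one_sq])
    (cyclotomicRep_of_a_pow_four R hw)

end Comaximal

section Wedderburn

variable {K : Type*} [CommRing K] [Algebra R K]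

/-- The product of the four linear characters and the two `2`-dimensional representations. -/
noncomputable def wedderburnHom {w : K} (hw : w ^ 2 = -2) : MonoidAlgebra R QD16 →ₐ[R]
    R × R × R × R × Matrix (Fin 2) (Fin 2) R × Matrix (Fin 2) (Fin 2) K :=
  (character R 1 1).prod <| (character R 1 (-1)).prod <| (character R (-1) 1).prod <|
    (character R (-1) (-1)).prod <| (gaussianRep R).prod (cyclotomicRep R hw)

lemma wedderburnHom_surjective [Invertible (2 : R)] (b : Module.Basis (Fin 2) R K) (hb₀ : b 0 = 1)
    (hb₁ : b 1 ^ 2 = -2) :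
    Function.Surjective (wedderburnHom R hb₁) := by
  have character_comaximal_reps (ε η : ℤˣ) :
      Comaximal (character R ε η) ((gaussianRep R).prod (cyclotomicRep R hb₁)) :=
    (comaximal_character_gaussianRep R ε η).prod_right
      (comaximal_character_cyclotomicRep R ε η hb₁)
  refine Comaximal.surjective_prod ?_ (character_surjective R 1 1) <|
    Comaximal.surjective_prod ?_ (character_surjective R 1 (-1)) <|
    Comaximal.surjective_prod ?_ (character_surjective R (-1) 1) <|
    Comaximal.surjective_prod (character_comaximal_reps (-1) (-1))
      (character_surjective R (-1) (-1)) <|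
    (comaximal_gaussianRep_cyclotomicRep R hb₁).surjective_prod (gaussianRep_surjective R)
      (cyclotomicRep_surjective R b hb₀ hb₁)
  · exact .prod_right (comaximal_character R (by decide)) <|
      .prod_right (comaximal_character R (by decide)) <|
      .prod_right (comaximal_character R (by decide)) <| character_comaximal_reps 1 1
  · exact .prod_right (comaximal_character R (by decide)) <|
      .prod_right (comaximal_character R (by decide)) <| character_comaximal_reps 1 (-1)
  · exact .prod_right (comaximal_character R (by decide)) <| character_comaximal_reps (-1) 1

lemma finrank_le_finrank_wedderburn [Nontrivial R] (b : Module.Basis (Fin 2) R K) :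
    Module.finrank R (MonoidAlgebra R QD16) ≤ Module.finrank R
      (R × R × R × R × Matrix (Fin 2) (Fin 2) R × Matrix (Fin 2) (Fin 2) K) := by
  have := Module.Free.of_basis b
  have := Module.Finite.of_basis b
  have finrank_K : Module.finrank R K = 2 := Module.finrank_eq_card_basis b
  rw [Module.finrank_eq_nat_card_basis (MonoidAlgebra.basis QD16 R)]
  simpa [Module.finrank_prod, Module.finrank_matrix, finrank_K] using card_le_sixteen

lemma wedderburnHom_bijective [Invertible (2 : R)] (b : Module.Basis (Fin 2) R K) (hb₀ : b 0 = 1)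
    (hb₁ : b 1 ^ 2 = -2) :
    Function.Bijective (wedderburnHom R hb₁) := by
  refine ⟨?_, wedderburnHom_surjective R b hb₀ hb₁⟩
  nontriviality R
  have := Module.Free.of_basis b
  have := Module.Finite.of_basis b
  have := Module.Finite.of_basis (MonoidAlgebra.basis QD16 R)
  exact (OrzechProperty.bijective_of_surjective_of_finrank_le (wedderburnHom R hb₁).toLinearMap
    (wedderburnHom_surjective R b hb₀ hb₁) (finrank_le_finrank_wedderburn R b)).1

end Wedderburn

end QD16

theorem groupAlgebra_QD16_wedderburn_neg_one_three_general {R K : Type*} [CommRing R]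
    [Invertible (2 : R)] [CommRing K] [Algebra R K] (b : Module.Basis (Fin 2) R K) (hb₀ : b 0 = 1)
    (hb₁ : b 1 ^ 2 = -2) :
    Nonempty (MonoidAlgebra R QD16 ≃ₐ[R]
      (R × R × R × R × Matrix (Fin 2) (Fin 2) R × Matrix (Fin 2) (Fin 2) K)) :=
  ⟨.ofBijective (QD16.wedderburnHom R hb₁) (QD16.wedderburnHom_bijective R b hb₀ hb₁)⟩

lemma exists_basis_one_sqrt {F K : Type*} [Field F] [Field K] [Algebra F K] {d : F}
    (hF : ¬ IsSquare d) (hK : IsSquare (algebraMap F K d)) (hrank : Module.finrank F K = 2) :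
    ∃ b : Module.Basis (Fin 2) F K, b 0 = 1 ∧ b 1 ^ 2 = algebraMap F K d := by
  obtain ⟨w, hw⟩ := hK
  have hindep : LinearIndependent F ![1, w] := by
    rw [LinearIndependent.pair_iff' one_ne_zero]
    rintro r rfl
    refine hF ⟨r, (algebraMap F K).injective ?_⟩
    rw [hw, ← Algebra.algebraMap_eq_smul_one, map_mul]
  refine ⟨basisOfLinearIndependentOfCardEqFinrank hindep (by simp [hrank]), ?_, ?_⟩ <;>
    simp [hw, sq]

lemma exists_basis_one_sqrt_neg_two_of_card {F K : Type*} [Field F] [Fintype F] [Field K]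
    [Fintype K] [Algebra F K] (h8 : Fintype.card F % 8 = 7 ∨ Fintype.card F % 8 = 5)
    (hK : Fintype.card K = Fintype.card F ^ 2) :
    ∃ b : Module.Basis (Fin 2) F K, b 0 = 1 ∧ b 1 ^ 2 = -2 := by
  have not_isSquare : ¬ IsSquare (-2 : F) := by
    rw [FiniteField.isSquare_neg_two_iff]
    lia
  have card_K_mod : Fintype.card K % 8 = 1 := by
    obtain h | h := h8 <;> rw [hK, Nat.pow_mod, h]
  have isSquare : IsSquare (algebraMap F K (-2)) := by
    rw [map_neg, map_ofNat, FiniteField.isSquare_neg_two_iff]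
    lia
  have finrank_K : Module.finrank F K = 2 :=
    Nat.pow_right_injective Fintype.one_lt_card (Module.card_eq_pow_finrank.symm.trans hK)
  simpa only [map_neg, map_ofNat] using
    exists_basis_one_sqrt not_isSquare isSquare finrank_K

/-- For `q ≡ -1, -3 (mod 8)` (i.e. `q % 8 = 7` or `q % 8 = 5`),
`F_q[QD_16] ≅ F_q⁴ ⊕ M(2,F_q) ⊕ M(2,F_{q²})`. -/
theorem groupAlgebra_QD16_wedderburn_neg_one_three (F : Type) [Field F] [Fintype F]
    (p n : ℕ) [Fact p.Prime] (hp : Odd p) [CharP F p]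
    (hn : 0 < n) (hq : Fintype.card F = p ^ n)
    (h8 : Fintype.card F % 8 = 7 ∨ Fintype.card F % 8 = 5)
    (K : Type) [Field K] [Fintype K] [Algebra F K]
    (hK : Fintype.card K = Fintype.card F ^ 2) :
    Nonempty (MonoidAlgebra F QD16 ≃ₐ[F]
      (F × F × F × F × Matrix (Fin 2) (Fin 2) F × Matrix (Fin 2) (Fin 2) K)) := by
  have two_ne_zero : (2 : F) ≠ 0 :=
    Ring.two_ne_zero (ringChar.eq F p ▸ hp.ne_two_of_dvd_nat dvd_rfl)
  let := invertibleOfNonzero two_ne_zero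
  obtain ⟨b, hb₀, hb₁⟩ := exists_basis_one_sqrt_neg_two_of_card h8 hK
  exact groupAlgebra_QD16_wedderburn_neg_one_three_general b hb₀ hb₁
end

section
/- Let F_q be a finite field of odd characteristic p with q = p^n elements. If q ≡ 1 (mod 16) or q ≡ 7 (mod 16), then the group algebra F_q[QD_32] is isomorphic as an F_q-algebra to F_q ⊕ F_q ⊕ F_q ⊕ F_q ⊕ M(2,F_q)^7, the direct sum of four copies of F_q and seven copies of the 2 × 2 matrix algebra over F_q. -/
/-- The quasidihedral group of order 32: `⟨a, x | a^16 = x^2 = 1, x a x = a^7⟩`. -/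
def QD32 : Type := PresentedGroup (qdRels 5)

instance : Group QD32 := inferInstanceAs (Group (PresentedGroup (qdRels 5)))

/-!
Write `M = 2 ^ (k - 2)`. From the relations every element of the quasidihedral group is of the form
`a ^ i * x ^ j`, so its group algebra over `F` has dimension at most `2 ^ k`. On the other hand the
group has four linear characters, and a two-dimensional representation for each admissible choice of
the trace `t` and the determinant `d` of `a`, in which `a` acts by the companion matrix of
`X ^ 2 - t * X + d` and `x` by an involution conjugating that matrix into its adjugate.

In such a representation `a + a ^ (M - 1)` and `a ^ M` act by the scalars `t` and `d`. Hence the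
kernels of different representations are comaximal, and so are the kernels of a linear character and
a two-dimensional representation, on which `(a + a ^ (M - 1)) ^ 2 - 4 * a ^ M` acts by `0` and by
the discriminant `t ^ 2 - 4 * d ≠ 0`. By the Chinese remainder theorem `F[G]` maps onto the product
of the corresponding matrix algebras, and `M - 1` pairs `(t, d)` fill the dimension, since
`4 + 4 * (M - 1) = 4 * M = 2 ^ k`.

For the group of order `32` all seven pairs have entries in `F` as soon as `s = ζ + ζ ^ 7` does,
where `ζ` is a primitive 16th root of unity; `s` is a root of `X ^ 4 + 4 * X ^ 2 + 2`. Over a field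
with `q` elements the Frobenius sends `s` to `ζ ^ q + ζ ^ (7 * q)`, which is `s` if `q` is `1` or
`7` modulo `16`, because `49` is `1` modulo `16`.
-/

open Polynomial Function
open scoped Pointwise

section ChineseRemainder

variable {R C A B : Type*} [CommSemiring R] [Ring C] [Ring A] [Ring B]
  [Algebra R C] [Algebra R A] [Algebra R B] {f : C →ₐ[R] A} {g : C →ₐ[R] B}

lemma ker_sup_ker_eq_top_iff : RingHom.ker f ⊔ RingHom.ker g = ⊤ ↔ ∃ e, f e = 1 ∧ g e = 0 := by
  simp only [Ideal.eq_top_iff_one, Submodule.mem_sup, RingHom.mem_ker]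
  constructor
  · rintro ⟨y, hy, e, he, hye⟩
    exact ⟨e, by rw [← map_one f, ← hye, map_add, hy, zero_add], he⟩
  · rintro ⟨e, hfe, hge⟩
    exact ⟨1 - e, by simp [hfe], e, hge, sub_add_cancel 1 e⟩

lemma ker_sup_ker_eq_top_of_algebraMap {F : Type*} [Field F] [Algebra F C] [Algebra F A]
    [Algebra F B] {f : C →ₐ[F] A} {g : C →ₐ[F] B} {w : C} {α β : F}
    (hf : f w = algebraMap F A α) (hg : g w = algebraMap F B β) (hαβ : α ≠ β) :
    RingHom.ker f ⊔ RingHom.ker g = ⊤ := by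
  refine ker_sup_ker_eq_top_iff.mpr ⟨(α - β)⁻¹ • (w - algebraMap F C β), ?_, ?_⟩
  · rw [map_smul, map_sub, AlgHom.commutes, hf, ← map_sub, Algebra.algebraMap_eq_smul_one,
      inv_smul_smul₀ (sub_ne_zero.mpr hαβ)]
  · simp [hg]

lemma algHom_prod_surjective (hf : Surjective f) (hg : Surjective g)
    (hfg : RingHom.ker f ⊔ RingHom.ker g = ⊤) : Surjective (f.prod g) := by
  obtain ⟨e, hfe, hge⟩ := ker_sup_ker_eq_top_iff.mp hfg
  rintro ⟨y, z⟩
  obtain ⟨y, rfl⟩ := hf y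
  obtain ⟨z, rfl⟩ := hg z
  exact ⟨e * y + (1 - e) * z, by simp [hfe, hge]⟩

variable {ι : Type*} [Finite ι] {D : ι → Type*} [∀ i, Ring (D i)] [∀ i, Algebra R (D i)]
  {h : ∀ i, C →ₐ[R] D i}

lemma ker_sup_ker_pi_eq_top (hfh : ∀ i, RingHom.ker f ⊔ RingHom.ker (h i) = ⊤) :
    RingHom.ker f ⊔ RingHom.ker (AlgHom.pi h) = ⊤ := by
  cases nonempty_fintype ι
  have ker_pi : RingHom.ker (AlgHom.pi h) = ⨅ i ∈ Finset.univ, RingHom.ker (h i) := by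
    ext c
    simp [funext_iff]
  rw [ker_pi]
  exact Ideal.sup_iInf_eq_top fun i _ ↦ hfh i

lemma algHom_pi_surjective (hh : ∀ i, Surjective (h i))
    (hcop : Pairwise fun i j ↦ RingHom.ker (h i) ⊔ RingHom.ker (h j) = ⊤) :
    Surjective (AlgHom.pi h) := by
  classical
  cases nonempty_fintype ι
  have exists_idempotent (i : ι) : ∃ e, h i e = 1 ∧ ∀ j ≠ i, h j e = 0 := by
    obtain ⟨e, hie, hje⟩ := ker_sup_ker_eq_top_iff.mp <|
      ker_sup_ker_pi_eq_top (h := fun j : {j // j ≠ i} ↦ h j) fun j ↦ hcop j.2.symm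
    exact ⟨e, hie, fun j hj ↦ congrFun hje ⟨j, hj⟩⟩
  choose e he_one he_zero using exists_idempotent
  intro y
  choose c hc using fun i ↦ hh i (y i)
  refine ⟨∑ i, e i * c i, funext fun j ↦ ?_⟩
  rw [AlgHom.pi_apply, map_sum, Fintype.sum_eq_single j]
  · rw [map_mul, he_one, one_mul, hc]
  · intro i hij
    rw [map_mul, he_zero i j hij.symm, zero_mul]

end ChineseRemainder

section GeneratedByTwo

variable {G : Type*} [Group G] {a x : G}

lemma normal_zpowers_of_closure_pair_eq_top (hgen : Subgroup.closure {a, x} = ⊤)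
    (ha : IsOfFinOrder a) (hxa : x * a * x⁻¹ ∈ Subgroup.zpowers a) :
    (Subgroup.zpowers a).Normal := by
  have : Finite (Subgroup.zpowers a : Set G) := ha.finite_zpowers
  have hx : x ∈ Subgroup.normalizer (Subgroup.zpowers a : Set G) := by
    refine Subgroup.mem_normalizer_fintype ?_
    rintro _ ⟨i, rfl⟩
    simpa only [conj_zpow, SetLike.mem_coe] using zpow_mem hxa i
  rw [← Subgroup.normalizer_eq_top_iff, eq_top_iff, ← hgen, Subgroup.closure_le]
  rintro _ (rfl | rfl)
  · exact Subgroup.le_normalizer (Subgroup.mem_zpowers _)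
  · exact hx

lemma zpowers_mul_zpowers_eq_univ (hgen : Subgroup.closure {a, x} = ⊤)
    (ha : IsOfFinOrder a) (hxa : x * a * x⁻¹ ∈ Subgroup.zpowers a) :
    (Subgroup.zpowers a : Set G) * (Subgroup.zpowers x : Set G) = Set.univ := by
  have := normal_zpowers_of_closure_pair_eq_top hgen ha hxa
  rw [← Subgroup.normal_mul, Subgroup.zpowers_eq_closure, Subgroup.zpowers_eq_closure,
    ← Subgroup.closure_union, Set.singleton_union, hgen, Subgroup.coe_top]

lemma finite_of_closure_pair_eq_top (hgen : Subgroup.closure {a, x} = ⊤) (ha : IsOfFinOrder a)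
    (hx : IsOfFinOrder x) (hxa : x * a * x⁻¹ ∈ Subgroup.zpowers a) : Finite G := by
  rw [← Set.finite_univ_iff, ← zpowers_mul_zpowers_eq_univ hgen ha hxa]
  exact ha.finite_zpowers.mul hx.finite_zpowers

lemma card_le_orderOf_mul_orderOf (hgen : Subgroup.closure {a, x} = ⊤) (ha : IsOfFinOrder a)
    (hxa : x * a * x⁻¹ ∈ Subgroup.zpowers a) : Nat.card G ≤ orderOf a * orderOf x := by
  rw [← Nat.card_univ, ← zpowers_mul_zpowers_eq_univ hgen ha hxa, ← Nat.card_zpowers,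
    ← Nat.card_zpowers]
  exact Set.natCard_mul_le

end GeneratedByTwo

/-- The quasidihedral group of order `2 ^ k`, given by its presentation; `QD32` is the case
`k = 5`. -/
abbrev QuasidihedralGroup (k : ℕ) : Type := PresentedGroup (qdRels k)

namespace QuasidihedralGroup

section Group

variable {k : ℕ}

/-- The generator `a`, of order dividing `2 ^ (k - 1)`. -/
def a : QuasidihedralGroup k := PresentedGroup.of 0

/-- The generator `x`, an involution with `x * a * x = a ^ (2 ^ (k - 2) - 1)`. -/
def x : QuasidihedralGroup k := PresentedGroup.of 1

lemma a_pow : (a : QuasidihedralGroup k) ^ 2 ^ (k - 1) = 1 :=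
  PresentedGroup.one_of_mem (rels := qdRels k) (by simp [qdRels])

lemma x_sq : (x : QuasidihedralGroup k) ^ 2 = 1 :=
  PresentedGroup.one_of_mem (rels := qdRels k) (x := FreeGroup.of 1 ^ 2) (by simp [qdRels])

lemma x_mul_a_mul_x : (x : QuasidihedralGroup k) * a * x = a ^ (2 ^ (k - 2) - 1) :=
  mul_inv_eq_one.mp <| PresentedGroup.one_of_mem (rels := qdRels k)
    (x := .of 1 * .of 0 * .of 1 * (.of 0 ^ (2 ^ (k - 2) - 1))⁻¹) (by simp [qdRels])

lemma closure_pair_eq_top : Subgroup.closure {(a : QuasidihedralGroup k), x} = ⊤ := by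
  rw [← PresentedGroup.closure_range_of (qdRels k), ← Matrix.range_cons_cons_empty a x ![]]
  congr! 2
  ext i
  fin_cases i <;> rfl

lemma isOfFinOrder_a : IsOfFinOrder (a : QuasidihedralGroup k) :=
  isOfFinOrder_iff_pow_eq_one.mpr ⟨_, by positivity, a_pow⟩

lemma isOfFinOrder_x : IsOfFinOrder (x : QuasidihedralGroup k) :=
  isOfFinOrder_iff_pow_eq_one.mpr ⟨_, two_pos, x_sq⟩

lemma conj_a_mem_zpowers : (x : QuasidihedralGroup k) * a * x⁻¹ ∈ Subgroup.zpowers a := by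
  have x_inv : (x : QuasidihedralGroup k)⁻¹ = x := inv_eq_of_mul_eq_one_left (by rw [← sq, x_sq])
  rw [x_inv, x_mul_a_mul_x]
  exact Subgroup.npow_mem_zpowers a _

instance : Finite (QuasidihedralGroup k) :=
  finite_of_closure_pair_eq_top closure_pair_eq_top isOfFinOrder_a isOfFinOrder_x
    conj_a_mem_zpowers

lemma card_le (hk : 1 ≤ k) : Nat.card (QuasidihedralGroup k) ≤ 2 ^ k :=
  calc Nat.card (QuasidihedralGroup k)
      ≤ orderOf (a : QuasidihedralGroup k) * orderOf (x : QuasidihedralGroup k) :=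
        card_le_orderOf_mul_orderOf closure_pair_eq_top isOfFinOrder_a conj_a_mem_zpowers
    _ ≤ 2 ^ (k - 1) * 2 :=
        Nat.mul_le_mul (orderOf_le_of_pow_eq_one (by positivity) a_pow)
          (orderOf_le_of_pow_eq_one two_pos x_sq)
    _ = 2 ^ k := by rw [← pow_succ, Nat.sub_add_cancel hk]

end Group

section UniversalProperty

variable {k : ℕ} {R A : Type*} [CommSemiring R] [Semiring A] [Algebra R A] {α ξ : A}

/-- The monoid homomorphism `a ↦ α`, `x ↦ ξ` attached to elements satisfying the relations of the
presentation. -/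
noncomputable def lift {M : Type*} [Monoid M] {α ξ : M} (hα : α ^ 2 ^ (k - 1) = 1)
    (hξ : ξ ^ 2 = 1) (hξα : ξ * α * ξ = α ^ (2 ^ (k - 2) - 1)) : QuasidihedralGroup k →* M :=
  (Units.coeHom M).comp <| PresentedGroup.toGroup
    (f := ![Units.ofPowEqOne α _ hα (by positivity), Units.ofPowEqOne ξ 2 hξ two_ne_zero]) <| by
      rintro _ (rfl | rfl | rfl)
      · ext; simp
      · ext; simp
      · rw [map_mul, map_inv, mul_inv_eq_one]
        ext
        simpa using hξα

/-- The algebra homomorphism out of the group algebra extending `lift`. -/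
noncomputable def liftAlgHom (hα : α ^ 2 ^ (k - 1) = 1) (hξ : ξ ^ 2 = 1)
    (hξα : ξ * α * ξ = α ^ (2 ^ (k - 2) - 1)) : MonoidAlgebra R (QuasidihedralGroup k) →ₐ[R] A :=
  MonoidAlgebra.lift R A (QuasidihedralGroup k) (lift hα hξ hξα)

variable (hα : α ^ 2 ^ (k - 1) = 1) (hξ : ξ ^ 2 = 1) (hξα : ξ * α * ξ = α ^ (2 ^ (k - 2) - 1))

@[simp]
lemma liftAlgHom_of_a : liftAlgHom hα hξ hξα (MonoidAlgebra.of R _ a) = α := by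
  rw [liftAlgHom, MonoidAlgebra.lift_of, lift, MonoidHom.comp_apply, a, PresentedGroup.toGroup.of]
  rfl

@[simp]
lemma liftAlgHom_of_x : liftAlgHom hα hξ hξα (MonoidAlgebra.of R _ x) = ξ := by
  rw [liftAlgHom, MonoidAlgebra.lift_of, lift, MonoidHom.comp_apply, x, PresentedGroup.toGroup.of]
  rfl

end UniversalProperty

section SquareRootsOfUnity

variable {M : Type*} [Monoid M] {α : M} {n : ℕ}

lemma pow_two_pow_of_sq_eq_one (hα : α ^ 2 = 1) (hn : n ≠ 0) : α ^ 2 ^ n = 1 := by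
  rw [← Nat.succ_pred_eq_of_ne_zero hn, pow_succ', pow_mul, hα, one_pow]

lemma pow_two_pow_sub_one_of_sq_eq_one (hα : α ^ 2 = 1) (hn : n ≠ 0) : α ^ (2 ^ n - 1) = α := by
  calc α ^ (2 ^ n - 1) = α ^ 2 ^ n * α := by
        rw [← pow_sub_one_mul (pow_ne_zero n two_ne_zero) α, mul_assoc, ← sq, hα, mul_one]
    _ = α := by rw [pow_two_pow_of_sq_eq_one hα hn, one_mul]

end SquareRootsOfUnity

section Representations

/-- The companion matrix of `X ^ 2 - t * X + d`. -/
def companion {R : Type*} [CommRing R] (t d : R) : Matrix (Fin 2) (Fin 2) R := !![0, -d; 1, t]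

/-- The involution conjugating `companion t d` into its adjugate. -/
def reflection {R : Type*} [CommRing R] (t : R) : Matrix (Fin 2) (Fin 2) R := !![1, t; 0, -1]

section CommRing

variable {R : Type*} [CommRing R] {t d : R}

lemma reflection_sq : reflection t ^ 2 = 1 := by
  simp [reflection, sq, Matrix.one_fin_two]

lemma reflection_mul_companion_mul_reflection :
    reflection t * companion t d * reflection t = algebraMap R _ t - companion t d := by
  ext i j
  fin_cases i <;> fin_cases j <;>
    simp [reflection, companion, Matrix.mul_apply, Matrix.algebraMap_matrix_apply]

lemma companion_mul_sub_companion :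
    companion t d * (algebraMap R _ t - companion t d) = algebraMap R _ d := by
  ext i j
  fin_cases i <;> fin_cases j <;>
    simp [companion, Matrix.mul_apply, Matrix.algebraMap_matrix_apply, mul_comm]

lemma aeval_companion : aeval (companion t d) (X ^ 2 - C t * X + C d) = 0 := by
  simp only [map_add, map_sub, map_mul, map_pow, aeval_X, aeval_C,
    ← companion_mul_sub_companion (t := t) (d := d), mul_sub, ← Algebra.commutes t]
  rw [sq]
  abel

lemma companion_pow_of_dvd {n : ℕ} {c : R} (hdvd : X ^ 2 - C t * X + C d ∣ X ^ n - C c) :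
    companion t d ^ n = algebraMap R _ c := by
  have h := aeval_eq_zero_of_dvd_aeval_eq_zero hdvd (aeval_companion (t := t) (d := d))
  simpa [sub_eq_zero] using h

lemma linearCombination_companion_reflection (c₀ c₁ c₂ c₃ : R) :
    c₀ • 1 + c₁ • companion t d + c₂ • reflection t + c₃ • (companion t d * reflection t) =
      !![c₀ + c₂, d * (c₃ - c₁) + t * c₂; c₁ + c₃, c₀ + t * c₁ - c₂] := by
  ext i j
  fin_cases i <;> fin_cases j <;> simp [companion, reflection] <;> ring

end CommRing

variable {F : Type*} [Field F] {k : ℕ} {t d : F}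

lemma exists_eq_linearCombination_companion_reflection (hdisc : t ^ 2 - 4 * d ≠ 0)
    (M : Matrix (Fin 2) (Fin 2) F) : ∃ c₀ c₁ c₂ c₃ : F,
      c₀ • 1 + c₁ • companion t d + c₂ • reflection t + c₃ • (companion t d * reflection t)
        = M := by
  obtain ⟨m₀₀, m₀₁, m₁₀, m₁₁, rfl⟩ : ∃ m₀₀ m₀₁ m₁₀ m₁₁, M = !![m₀₀, m₀₁; m₁₀, m₁₁] :=
    ⟨_, _, _, _, M.eta_fin_two⟩
  set D := t ^ 2 - 4 * d with hD
  let c₁ := (t * (m₁₁ - m₀₀) + 2 * (m₀₁ - d * m₁₀)) / D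
  let c₂ := (t * (m₀₁ - d * m₁₀) + 2 * d * (m₁₁ - m₀₀)) / D
  have h₀₁ : d * (m₁₀ - c₁ - c₁) + t * c₂ = m₀₁ := by
    simp only [c₁, c₂]; field_simp; rw [hD]; ring
  have h₁₁ : m₀₀ - c₂ + t * c₁ - c₂ = m₁₁ := by
    simp only [c₁, c₂]; field_simp; rw [hD]; ring
  refine ⟨m₀₀ - c₂, c₁, c₂, m₁₀ - c₁, ?_⟩
  rw [linearCombination_companion_reflection, sub_add_cancel, add_sub_cancel, h₀₁, h₁₁]

/-- `(t, d)` is the trace and the determinant of the image of `a` in an absolutely irreducible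
two-dimensional representation of `QuasidihedralGroup k`. There `x` conjugates `a` into its adjugate
`d • a⁻¹`, so the relation `x * a * x = a ^ (2 ^ (k - 2) - 1)` becomes `a ^ 2 ^ (k - 2) = d`. -/
structure IsTraceDet (k : ℕ) (t d : F) : Prop where
  det_sq : d ^ 2 = 1
  charpoly_dvd : X ^ 2 - C t * X + C d ∣ X ^ 2 ^ (k - 2) - C d
  disc_ne_zero : t ^ 2 - 4 * d ≠ 0

namespace IsTraceDet

lemma companion_pow (h : IsTraceDet k t d) : companion t d ^ 2 ^ (k - 2) = algebraMap F _ d :=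
  companion_pow_of_dvd h.charpoly_dvd

lemma companion_pow_eq_one (h : IsTraceDet k t d) (hk : 2 ≤ k) :
    companion t d ^ 2 ^ (k - 1) = 1 := by
  rw [show k - 1 = (k - 2) + 1 by omega, pow_succ, pow_mul, h.companion_pow, ← map_pow, h.det_sq,
    map_one]

lemma companion_pow_pred (h : IsTraceDet k t d) (hk : 2 ≤ k) :
    companion t d ^ (2 ^ (k - 2) - 1) = algebraMap F _ t - companion t d := by
  have hunit : IsUnit (companion t d) :=
    IsUnit.of_pow_eq_one (h.companion_pow_eq_one hk) (by positivity)
  refine hunit.mul_left_cancel ?_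
  rw [companion_mul_sub_companion, mul_pow_sub_one (by positivity), h.companion_pow]

/-- The two-dimensional representation in which `a` has trace `t` and determinant `d`. -/
noncomputable def rep (h : IsTraceDet k t d) (hk : 2 ≤ k) :
    MonoidAlgebra F (QuasidihedralGroup k) →ₐ[F] Matrix (Fin 2) (Fin 2) F :=
  liftAlgHom (h.companion_pow_eq_one hk) (reflection_sq (t := t))
    (by rw [h.companion_pow_pred hk, reflection_mul_companion_mul_reflection])

variable (h : IsTraceDet k t d) (hk : 2 ≤ k)

lemma rep_surjective : Surjective (h.rep hk) := by
  intro M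
  obtain ⟨c₀, c₁, c₂, c₃, hM⟩ := exists_eq_linearCombination_companion_reflection h.disc_ne_zero M
  refine ⟨c₀ • 1 + c₁ • .of F _ a + c₂ • .of F _ x + c₃ • (.of F _ a * .of F _ x), ?_⟩
  simp only [rep, map_add, map_smul, map_mul, map_one, liftAlgHom_of_a, liftAlgHom_of_x, hM]

lemma rep_trace :
    h.rep hk (.of F _ a + .of F _ a ^ (2 ^ (k - 2) - 1)) = algebraMap F _ t := by
  rw [rep, map_add, map_pow, liftAlgHom_of_a, h.companion_pow_pred hk, add_sub_cancel]

lemma rep_det : h.rep hk (.of F _ a ^ 2 ^ (k - 2)) = algebraMap F _ d := by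
  rw [rep, map_pow, liftAlgHom_of_a, h.companion_pow]

lemma ker_rep_sup_ker_rep {t' d' : F} (h' : IsTraceDet k t' d') (hne : (t, d) ≠ (t', d')) :
    RingHom.ker (h.rep hk) ⊔ RingHom.ker (h'.rep hk) = ⊤ := by
  by_cases ht : t = t'
  · have hd : d ≠ d' := fun hd ↦ hne (by rw [ht, hd])
    exact ker_sup_ker_eq_top_of_algebraMap (h.rep_det hk) (h'.rep_det hk) hd
  · exact ker_sup_ker_eq_top_of_algebraMap (h.rep_trace hk) (h'.rep_trace hk) ht

end IsTraceDet

/-- The linear character `a ↦ α`, `x ↦ ξ`, for square roots of unity `α` and `ξ`. -/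
noncomputable def linearChar {α ξ : F} (hα : α ^ 2 = 1) (hξ : ξ ^ 2 = 1) (hk : 3 ≤ k) :
    MonoidAlgebra F (QuasidihedralGroup k) →ₐ[F] F :=
  liftAlgHom (pow_two_pow_of_sq_eq_one hα (by omega)) hξ
    (by rw [pow_two_pow_sub_one_of_sq_eq_one hα (show k - 2 ≠ 0 by omega), mul_right_comm, ← sq,
      hξ, one_mul])

section LinearChar

variable {α ξ : F} (hα : α ^ 2 = 1) (hξ : ξ ^ 2 = 1) (hk : 3 ≤ k)

lemma linearChar_surjective : Surjective (linearChar hα hξ hk) := fun c ↦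
  ⟨algebraMap F _ c, AlgHom.commutes _ c⟩

lemma ker_linearChar_sup_ker_linearChar {α' ξ' : F} (hα' : α' ^ 2 = 1) (hξ' : ξ' ^ 2 = 1)
    (hne : (α, ξ) ≠ (α', ξ')) :
    RingHom.ker (linearChar hα hξ hk) ⊔ RingHom.ker (linearChar hα' hξ' hk) = ⊤ := by
  by_cases hαα' : α = α'
  · have hξξ' : ξ ≠ ξ' := fun hξξ' ↦ hne (by rw [hαα', hξξ'])
    exact ker_sup_ker_eq_top_of_algebraMap (liftAlgHom_of_x ..) (liftAlgHom_of_x ..) hξξ'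
  · exact ker_sup_ker_eq_top_of_algebraMap (liftAlgHom_of_a ..) (liftAlgHom_of_a ..) hαα'

/-- An element acting on `IsTraceDet.rep` by the discriminant `t ^ 2 - 4 * d`. -/
noncomputable def discElt : MonoidAlgebra F (QuasidihedralGroup k) :=
  (.of F _ a + .of F _ a ^ (2 ^ (k - 2) - 1)) ^ 2 - 4 * .of F _ a ^ 2 ^ (k - 2)

lemma linearChar_discElt : linearChar hα hξ hk discElt = 0 := by
  have hk' : k - 2 ≠ 0 := by omega
  simp only [discElt, map_sub, map_pow, map_add, map_mul, map_ofNat, linearChar, liftAlgHom_of_a,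
    pow_two_pow_sub_one_of_sq_eq_one hα hk', pow_two_pow_of_sq_eq_one hα hk']
  linear_combination 4 * hα

lemma rep_discElt (h : IsTraceDet k t d) (hk : 2 ≤ k) :
    h.rep hk discElt = algebraMap F _ (t ^ 2 - 4 * d) := by
  rw [discElt, map_sub, map_pow, map_mul, map_ofNat, h.rep_trace, h.rep_det, map_sub, map_pow,
    map_mul, map_ofNat]

lemma ker_linearChar_sup_ker_rep (h : IsTraceDet k t d) :
    RingHom.ker (linearChar hα hξ hk) ⊔ RingHom.ker (h.rep (by omega)) = ⊤ :=
  ker_sup_ker_eq_top_of_algebraMap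
    ((linearChar_discElt hα hξ hk).trans (map_zero (algebraMap F F)).symm)
    (rep_discElt h (by omega)) h.disc_ne_zero.symm

end LinearChar

end Representations

section Decomposition

variable {F : Type*} [Field F]

/-- The values of the four linear characters on the pair of generators `(a, x)`. -/
def linearCharValues (F : Type*) [Field F] : Fin 4 → F × F := ![(1, 1), (1, -1), (-1, 1), (-1, -1)]

lemma linearCharValues_sq (i : Fin 4) :
    (linearCharValues F i).1 ^ 2 = 1 ∧ (linearCharValues F i).2 ^ 2 = 1 := by
  fin_cases i <;> simp [linearCharValues]

lemma linearCharValues_injective (h2 : (2 : F) ≠ 0) : Injective (linearCharValues F) := by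
  have h : (1 : F) ≠ -1 := fun h ↦ h2 (by linear_combination h)
  intro i j
  fin_cases i <;> fin_cases j <;> simp [linearCharValues, h, h.symm]

variable {k : ℕ} {ι : Type*} {P : ι → F × F}

/-- The product of the four linear characters and of the representations with trace and
determinant in the family `P`. -/
noncomputable def wedderburnHom (hk : 3 ≤ k) (hP : ∀ i, IsTraceDet k (P i).1 (P i).2) :
    MonoidAlgebra F (QuasidihedralGroup k) →ₐ[F]
      (Fin 4 → F) × (ι → Matrix (Fin 2) (Fin 2) F) :=
  (AlgHom.pi fun i ↦ linearChar (linearCharValues_sq i).1 (linearCharValues_sq i).2 hk).prod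
    (AlgHom.pi fun i ↦ (hP i).rep (by omega))

lemma wedderburnHom_surjective [Finite ι] (h2 : (2 : F) ≠ 0) (hk : 3 ≤ k)
    (hP : ∀ i, IsTraceDet k (P i).1 (P i).2) (hP_inj : Injective P) :
    Surjective (wedderburnHom hk hP) := by
  refine algHom_prod_surjective
    (algHom_pi_surjective (fun _ ↦ linearChar_surjective _ _ _) fun i j hij ↦ ?_)
    (algHom_pi_surjective (fun i ↦ (hP i).rep_surjective _) fun i j hij ↦ ?_)
    (ker_sup_ker_pi_eq_top fun j ↦ ?_)
  · exact ker_linearChar_sup_ker_linearChar _ _ _ _ _ ((linearCharValues_injective h2).ne hij)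
  · exact (hP i).ker_rep_sup_ker_rep _ (hP j) (hP_inj.ne hij)
  · rw [sup_comm]
    refine ker_sup_ker_pi_eq_top fun i ↦ ?_
    rw [sup_comm]
    exact ker_linearChar_sup_ker_rep _ _ hk (hP j)

theorem wedderburnHom_bijective [Fintype ι] (h2 : (2 : F) ≠ 0) (hk : 3 ≤ k)
    (hP : ∀ i, IsTraceDet k (P i).1 (P i).2) (hP_inj : Injective P)
    (hι : Fintype.card ι = 2 ^ (k - 2) - 1) : Bijective (wedderburnHom hk hP) := by
  have hsurj := wedderburnHom_surjective h2 hk hP hP_inj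
  have : Module.Finite F (MonoidAlgebra F (QuasidihedralGroup k)) :=
    .of_basis (MonoidAlgebra.basis _ F)
  have finrank_target :
      Module.finrank F ((Fin 4 → F) × (ι → Matrix (Fin 2) (Fin 2) F)) = 2 ^ k := by
    obtain ⟨m, rfl⟩ := Nat.exists_eq_add_of_le' (show 2 ≤ k by omega)
    have := Nat.one_le_two_pow (n := m)
    simp only [Module.finrank_prod, Module.finrank_fintype_fun_eq_card, Module.finrank_pi_fintype,
      Module.finrank_matrix, Module.finrank_self, Fintype.card_fin, Finset.sum_const,
      Finset.card_univ, hι, smul_eq_mul, pow_add, Nat.add_sub_cancel]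
    omega
  have finrank_source : Module.finrank F (MonoidAlgebra F (QuasidihedralGroup k)) ≤ 2 ^ k := by
    rw [Module.finrank_eq_nat_card_basis (MonoidAlgebra.basis _ F)]
    exact card_le (by omega)
  have finrank_eq := (finrank_source.trans finrank_target.ge).antisymm
    (LinearMap.finrank_le_finrank_of_surjective (f := (wedderburnHom hk hP).toLinearMap) hsurj)
  exact ⟨(LinearMap.injective_iff_surjective_of_finrank_eq_finrank finrank_eq
    (f := (wedderburnHom hk hP).toLinearMap)).mpr hsurj, hsurj⟩

end Decomposition

section OrderThirtyTwo

variable {F : Type*} [Field F] {s : F}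

lemma isTraceDet_zero_one (h2 : (2 : F) ≠ 0) : IsTraceDet 5 (0 : F) 1 where
  det_sq := one_pow 2
  charpoly_dvd := ⟨(X ^ 2 - 1) * (X ^ 4 + 1), by simp only [C_0, C_1]; ring⟩
  disc_ne_zero h := h2 (pow_eq_zero_iff two_ne_zero |>.mp (by linear_combination -h))

lemma isTraceDet_one {r : F} (h2 : (2 : F) ≠ 0) (hr : r ^ 2 = 2) : IsTraceDet 5 r 1 where
  det_sq := one_pow 2
  charpoly_dvd := by
    have hCr : (C r : F[X]) ^ 2 = 2 := by rw [← C_pow, hr]; rfl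
    refine ⟨(X ^ 2 + C r * X + 1) * (X ^ 4 - 1), ?_⟩
    simp only [C_1]
    linear_combination (X ^ 6 - X ^ 2) * hCr
  disc_ne_zero h := h2 (by linear_combination hr - h)

lemma isTraceDet_neg_one (h2 : (2 : F) ≠ 0) (hs : s ^ 4 + 4 * s ^ 2 + 2 = 0) :
    IsTraceDet 5 s (-1) where
  det_sq := neg_one_sq
  charpoly_dvd := by
    have hCs : (C s : F[X]) ^ 4 + 4 * C s ^ 2 + 2 = 0 := by
      simpa only [map_add, map_mul, map_pow, map_ofNat, map_zero] using congrArg C hs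
    refine ⟨(X ^ 2 + C s * X - 1) * (X ^ 4 + (C s ^ 2 + 2) * X ^ 2 + 1), ?_⟩
    simp only [C_neg, C_1]
    linear_combination X ^ 4 * hCs
  disc_ne_zero h := h2 (by linear_combination hs - s ^ 2 * h)

/-- The trace and determinant pairs of the seven two-dimensional representations of the group of
order `32`. If `s = ζ + ζ ^ 7` for a primitive 16th root of unity `ζ`, then
`s ^ 2 + 2 = ζ ^ 2 + ζ ^ 14` and `s ^ 3 + 3 * s = ζ ^ 3 + ζ ^ 5`. -/
def traceDets (s : F) : Fin 7 → F × F :=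
  ![(0, 1), (s ^ 2 + 2, 1), (-(s ^ 2 + 2), 1),
    (s, -1), (-s, -1), (s ^ 3 + 3 * s, -1), (-(s ^ 3 + 3 * s), -1)]

lemma isTraceDet_traceDets (h2 : (2 : F) ≠ 0) (hs : s ^ 4 + 4 * s ^ 2 + 2 = 0) (i : Fin 7) :
    IsTraceDet 5 (traceDets s i).1 (traceDets s i).2 := by
  have hr : (s ^ 2 + 2) ^ 2 = 2 := by linear_combination hs
  have hsq : (s ^ 3 + 3 * s) ^ 2 + 2 = -(s ^ 2 + 2) := by linear_combination (s ^ 2 + 2) * hs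
  have hs' : (s ^ 3 + 3 * s) ^ 4 + 4 * (s ^ 3 + 3 * s) ^ 2 + 2 = 0 := by
    linear_combination ((s ^ 3 + 3 * s) ^ 2 + 2 - (s ^ 2 + 2)) * hsq + hr
  fin_cases i
  · exact isTraceDet_zero_one h2
  · exact isTraceDet_one h2 hr
  · exact isTraceDet_one h2 ((neg_sq _).trans hr)
  · exact isTraceDet_neg_one h2 hs
  · exact isTraceDet_neg_one (s := -s) h2 (by linear_combination hs)
  · exact isTraceDet_neg_one h2 hs'
  · exact isTraceDet_neg_one (s := -(s ^ 3 + 3 * s)) h2 (by linear_combination hs')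

lemma traceDets_injective (h2 : (2 : F) ≠ 0) (hs : s ^ 4 + 4 * s ^ 2 + 2 = 0) :
    Injective (traceDets s) := by
  have ne_neg {y c : F} (hy : c * y = 2) : y ≠ -y := fun h ↦
    h2 (mul_self_eq_zero.mp (by linear_combination c * h - 2 * hy))
  have hr : s ^ 2 + 2 ≠ -(s ^ 2 + 2) := ne_neg (c := s ^ 2 + 2) (by linear_combination hs)
  have hs₁ : s ≠ -s := ne_neg (c := -(s ^ 3 + 4 * s)) (by linear_combination -hs)
  have hs₃ : s ^ 3 + 3 * s ≠ -(s ^ 3 + 3 * s) :=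
    ne_neg (c := -(s ^ 3 + 2 * s)) (by linear_combination -(s ^ 2 + 1) * hs)
  intro i j
  fin_cases i <;> fin_cases j <;>
    simp only [traceDets, Fin.reduceFinMk, Fin.zero_eta, Fin.mk_one, Fin.reduceEq,
      Matrix.cons_val, Prod.mk.injEq] <;>
    grind

end OrderThirtyTwo

/-- The splitting of two powers of algebras into their factors. -/
def piProdPiAlgEquiv (R A B : Type*) [CommSemiring R] [Semiring A] [Semiring B] [Algebra R A]
    [Algebra R B] : ((Fin 4 → A) × (Fin 7 → B)) ≃ₐ[R]
      (A × A × A × A × B × B × B × B × B × B × B) where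
  toFun v := (v.1 0, v.1 1, v.1 2, v.1 3, v.2 0, v.2 1, v.2 2, v.2 3, v.2 4, v.2 5, v.2 6)
  invFun := fun (a₀, a₁, a₂, a₃, b₀, b₁, b₂, b₃, b₄, b₅, b₆) ↦
    (![a₀, a₁, a₂, a₃], ![b₀, b₁, b₂, b₃, b₄, b₅, b₆])
  left_inv v := by ext i <;> fin_cases i <;> rfl
  right_inv _ := rfl
  map_mul' _ _ := rfl
  map_add' _ _ := rfl
  commutes' _ := rfl

end QuasidihedralGroup

section FiniteField

variable {F : Type*} [Field F] [Fintype F]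

lemma mem_range_algebraMap_of_pow_card_eq {K : Type*} [CommRing K] [IsDomain K] [Algebra F K]
    {y : K} (hy : y ^ Fintype.card F = y) : y ∈ (algebraMap F K).range := by
  have hsplits : (X ^ Fintype.card F - X : F[X]).Splits := by
    rw [splits_iff_card_roots, FiniteField.roots_X_pow_card_sub_X,
      FiniteField.X_pow_card_sub_X_natDegree_eq F Fintype.one_lt_card]
    rfl
  refine hsplits.mem_range_of_isRoot (FiniteField.X_pow_card_sub_X_ne_zero F Fintype.one_lt_card) ?_
  simp [hy]

lemma two_ne_zero_of_odd_card (hodd : Odd (Fintype.card F)) : (2 : F) ≠ 0 :=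
  Ring.two_ne_zero fun hchar ↦
    Nat.not_even_iff_odd.mpr hodd (Nat.even_iff.mpr (FiniteField.even_card_iff_char_two.mp hchar))

lemma exists_pow_four_add_four_mul_sq_add_two_eq_zero
    (h16 : Fintype.card F % 16 = 1 ∨ Fintype.card F % 16 = 7) :
    ∃ s : F, s ^ 4 + 4 * s ^ 2 + 2 = 0 := by
  let K := AlgebraicClosure F
  obtain ⟨z, hz⟩ := IsAlgClosed.exists_pow_nat_eq (-1 : K) (n := 8) (by norm_num)
  have hz16 : z ^ 16 = 1 := by linear_combination (z ^ 8 - 1) * hz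
  have frobenius_fixes : (z + z ^ 7) ^ Fintype.card F = z + z ^ 7 := by
    have hadd : (z + z ^ 7) ^ Fintype.card F = z ^ Fintype.card F + (z ^ Fintype.card F) ^ 7 := by
      rw [pow_right_comm z]
      exact map_add (FiniteField.frobeniusAlgHom F K) z (z ^ 7)
    rw [hadd, pow_eq_pow_mod _ hz16]
    rcases h16 with h | h <;> rw [h]
    · rw [pow_one]
    · linear_combination (z ^ 33 + z ^ 17 + z) * hz16
  obtain ⟨s, hs⟩ := mem_range_algebraMap_of_pow_card_eq frobenius_fixes
  refine ⟨s, (algebraMap F K).injective ?_⟩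
  have hsq : (z + z ^ 7) ^ 2 + 2 = z ^ 2 - z ^ 6 := by linear_combination (z ^ 6 + 2) * hz
  simp only [map_add, map_mul, map_pow, map_zero, map_ofNat, hs]
  linear_combination ((z + z ^ 7) ^ 2 + 2 + z ^ 2 - z ^ 6) * hsq + (z ^ 4 - 2) * hz

end FiniteField

theorem groupAlgebra_QD32_wedderburn_one_seven_general {F : Type*} [Field F] (h2 : (2 : F) ≠ 0)
    (hroot : ∃ s : F, s ^ 4 + 4 * s ^ 2 + 2 = 0) :
    Nonempty (MonoidAlgebra F QD32 ≃ₐ[F]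
      (F × F × F × F ×
        Matrix (Fin 2) (Fin 2) F × Matrix (Fin 2) (Fin 2) F × Matrix (Fin 2) (Fin 2) F ×
        Matrix (Fin 2) (Fin 2) F × Matrix (Fin 2) (Fin 2) F × Matrix (Fin 2) (Fin 2) F ×
        Matrix (Fin 2) (Fin 2) F)) := by
  obtain ⟨s, hs⟩ := hroot
  have hbij := QuasidihedralGroup.wedderburnHom_bijective h2 (by norm_num)
    (QuasidihedralGroup.isTraceDet_traceDets h2 hs)
    (QuasidihedralGroup.traceDets_injective h2 hs) rfl
  exact ⟨(AlgEquiv.ofBijective _ hbij).trans (QuasidihedralGroup.piProdPiAlgEquiv F _ _)⟩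

theorem groupAlgebra_QD32_wedderburn_one_seven (F : Type) [Field F] [Fintype F]
    (p n : ℕ) [Fact p.Prime] (hp : Odd p) [CharP F p]
    (hn : 0 < n) (hq : Fintype.card F = p ^ n)
    (h16 : Fintype.card F % 16 = 1 ∨ Fintype.card F % 16 = 7) :
    Nonempty (MonoidAlgebra F QD32 ≃ₐ[F]
      (F × F × F × F ×
        Matrix (Fin 2) (Fin 2) F × Matrix (Fin 2) (Fin 2) F × Matrix (Fin 2) (Fin 2) F ×
        Matrix (Fin 2) (Fin 2) F × Matrix (Fin 2) (Fin 2) F × Matrix (Fin 2) (Fin 2) F ×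
        Matrix (Fin 2) (Fin 2) F)) :=
  groupAlgebra_QD32_wedderburn_one_seven_general
    (two_ne_zero_of_odd_card (Nat.odd_iff.mpr (by omega)))
    (exists_pow_four_add_four_mul_sq_add_two_eq_zero h16)
end

section
/- Let F_q be a finite field of odd characteristic p with q = p^n elements. If q ≡ -1 (mod 16) or q ≡ -7 (mod 16), then the group algebra F_q[QD_32] is isomorphic as an F_q-algebra to F_q ⊕ F_q ⊕ F_q ⊕ F_q ⊕ M(2,F_q)^3 ⊕ M(2,F_{q^2})^2, where F_{q^2} is the field with q^2 elements. -/
/-!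
Let `z` be a primitive 16th root of unity in the quadratic extension `K` of `F`, and let `σ` be the
automorphism of `K` over `F`, so that `σ z = z⁻¹` or `σ z = z⁹`. Every element of `F[QD_32]` is
`f(a) + x g(a)` with `f`, `g` of degree below 16. If it is killed by a two-dimensional
representation in which `a` has eigenvalues `l`, `l⁷`, with `x` exchanging the eigenlines, then `f`
and `g` vanish at `l` and `l⁷`; the two characters with `a ↦ c = ±1` and `x ↦ ±1` together give
vanishing at `c`. The even powers of `z` are reached by four characters and three two-dimensional
representations, and the latter are defined over `F` because `σ` fixes `z²ʲ + z⁻²ʲ`. The odd powers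
split into the orbits of `z` and `z³` under `l ↦ l⁷` and `σ`. Hence `f` and `g` vanish at all 16
powers of `z`, so the product of these nine representations is injective on `F[QD_32]`, and both
sides have dimension 32.
-/

open Polynomial

section MetacyclicPair

/-- The pair `(a, x)` satisfies the relations `a ^ m = 1`, `x ^ 2 = 1`, `x a x = a ^ r`. For
`m = 2 ^ (k - 1)` and `r = 2 ^ (k - 2) - 1` these are the relations presenting `QD_{2^k}`. -/
structure IsMetacyclicPair (m r : ℕ) {M : Type*} [Monoid M] (a x : M) : Prop where
  pow_eq_one : a ^ m = 1
  sq_eq_one : x ^ 2 = 1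
  conj_eq_pow : x * a * x = a ^ r

namespace IsMetacyclicPair

variable {m r : ℕ}

theorem prodMk {M N : Type*} [Monoid M] [Monoid N] {a x : M} {b y : N}
    (h : IsMetacyclicPair m r a x) (h' : IsMetacyclicPair m r b y) :
    IsMetacyclicPair m r (a, b) (x, y) where
  pow_eq_one := Prod.ext h.pow_eq_one h'.pow_eq_one
  sq_eq_one := Prod.ext h.sq_eq_one h'.sq_eq_one
  conj_eq_pow := Prod.ext h.conj_eq_pow h'.conj_eq_pow

theorem pow_mul_eq {M : Type*} [Monoid M] {a x : M} (h : IsMetacyclicPair m r a x) (i : ℕ) :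
    a ^ i * x = x * a ^ (r * i) := by
  have semiconj : SemiconjBy x (a ^ r) a := by
    rw [SemiconjBy, ← h.conj_eq_pow, ← mul_assoc, ← mul_assoc, ← sq, h.sq_eq_one, one_mul]
  rw [pow_mul]
  exact (semiconj.pow_right i).eq.symm

theorem exists_eq_pow_or_eq_mul_pow {G : Type*} [Group G] {a x : G}
    (h : IsMetacyclicPair m r a x) (hm : m ≠ 0) (hgen : Subgroup.closure {a, x} = ⊤) (g : G) :
    ∃ i < m, g = a ^ i ∨ g = x * a ^ i := by
  suffices hpow : ∃ i, g = a ^ i ∨ g = x * a ^ i by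
    obtain ⟨i, hi⟩ := hpow
    exact ⟨i % m, Nat.mod_lt i hm.bot_lt, by rwa [← pow_eq_pow_mod i h.pow_eq_one]⟩
  have hx_inv : x⁻¹ = x := inv_eq_of_mul_eq_one_right (by rw [← sq, h.sq_eq_one])
  have ha_inv : a⁻¹ = a ^ (m - 1) :=
    inv_eq_of_mul_eq_one_right (by rw [mul_pow_sub_one hm, h.pow_eq_one])
  have mul_x (y : G) : (∃ i, y = a ^ i ∨ y = x * a ^ i) →
      ∃ i, y * x = a ^ i ∨ y * x = x * a ^ i := by
    rintro ⟨i, rfl | rfl⟩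
    · exact ⟨r * i, .inr (h.pow_mul_eq i)⟩
    · refine ⟨r * i, .inl ?_⟩
      rw [mul_assoc, h.pow_mul_eq, ← mul_assoc, ← sq, h.sq_eq_one, one_mul]
  have mul_a_pow (y : G) (j : ℕ) : (∃ i, y = a ^ i ∨ y = x * a ^ i) →
      ∃ i, y * a ^ j = a ^ i ∨ y * a ^ j = x * a ^ i := by
    rintro ⟨i, rfl | rfl⟩
    · exact ⟨i + j, .inl (pow_add a i j).symm⟩
    · exact ⟨i + j, .inr (by rw [mul_assoc, pow_add])⟩
  have hg : g ∈ Subgroup.closure {a, x} := hgen ▸ Subgroup.mem_top g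
  induction hg using Subgroup.closure_induction_right with
  | one => exact ⟨0, .inl (pow_zero a).symm⟩
  | mul_right y _ s hs ih =>
    rcases hs with rfl | rfl
    · simpa using mul_a_pow y 1 ih
    · exact mul_x y ih
  | mul_inv_cancel y _ s hs ih =>
    rcases hs with rfl | rfl
    · simpa [ha_inv] using mul_a_pow y (m - 1) ih
    · simpa [hx_inv] using mul_x y ih

end IsMetacyclicPair

end MetacyclicPair

section Presentation

variable (k : ℕ)

theorem isMetacyclicPair_of_qdRels :
    IsMetacyclicPair (2 ^ (k - 1)) (2 ^ (k - 2) - 1)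
      (PresentedGroup.of 0 : PresentedGroup (qdRels k)) (PresentedGroup.of 1) where
  pow_eq_one := PresentedGroup.one_of_mem (rels := qdRels k)
    (x := FreeGroup.of 0 ^ 2 ^ (k - 1)) (by simp [qdRels])
  sq_eq_one := PresentedGroup.one_of_mem (rels := qdRels k)
    (x := FreeGroup.of 1 ^ 2) (by simp [qdRels])
  conj_eq_pow := PresentedGroup.mk_eq_mk_of_mul_inv_mem (rels := qdRels k)
    (x := FreeGroup.of 1 * FreeGroup.of 0 * FreeGroup.of 1)
    (y := FreeGroup.of 0 ^ (2 ^ (k - 2) - 1)) (by simp [qdRels])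

theorem closure_of_qdRels :
    Subgroup.closure {(PresentedGroup.of 0 : PresentedGroup (qdRels k)), PresentedGroup.of 1} =
      ⊤ := by
  rw [← PresentedGroup.closure_range_of, ← Set.image_univ]
  congr
  ext g
  simp [Fin.exists_fin_two, eq_comm]

variable (F : Type*) [CommSemiring F] {k} {R : Type*} [Semiring R] [Algebra F R]

theorem exists_algHom_of_isMetacyclicPair {a x : R}
    (h : IsMetacyclicPair (2 ^ (k - 1)) (2 ^ (k - 2) - 1) a x) :
    ∃ φ : MonoidAlgebra F (PresentedGroup (qdRels k)) →ₐ[F] R,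
      φ (MonoidAlgebra.of F _ (PresentedGroup.of 0)) = a ∧
        φ (MonoidAlgebra.of F _ (PresentedGroup.of 1)) = x := by
  let unitA : Rˣ := Units.ofPowEqOne a _ h.pow_eq_one (by positivity)
  let unitX : Rˣ := Units.ofPowEqOne x 2 h.sq_eq_one two_ne_zero
  have rels_hold : ∀ w ∈ qdRels k, FreeGroup.lift ![unitA, unitX] w = 1 := by
    rintro w (rfl | rfl | rfl)
    · ext; simp [unitA]
    · ext; simp [unitX]
    · rw [map_mul, map_inv, mul_inv_eq_one]
      ext; simpa [unitA, unitX] using h.conj_eq_pow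
  refine ⟨MonoidAlgebra.lift F R _ ((Units.coeHom R).comp (PresentedGroup.toGroup rels_hold)),
    ?_, ?_⟩ <;> rw [MonoidAlgebra.lift_of] <;> simp [unitA, unitX]

end Presentation

section TwistedEval

variable {F : Type*} [CommSemiring F] {R S : Type*} [Semiring R] [Algebra F R] [Semiring S]
  [Algebra F S]

/-- The element `f(a) + x g(a)` attached to a pair of polynomials `(f, g)`. When `(a, x)` are
generators satisfying `IsMetacyclicPair`, all elements of the group algebra have this form. -/
noncomputable def twistedEval (a x : R) : F[X] × F[X] →ₗ[F] R :=
  (aeval a).toLinearMap.coprod (LinearMap.mulLeft F x ∘ₗ (aeval a).toLinearMap)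

theorem twistedEval_apply (a x : R) (p : F[X] × F[X]) :
    twistedEval a x p = aeval a p.1 + x * aeval a p.2 := rfl

theorem map_twistedEval (φ : R →ₐ[F] S) (a x : R) (p : F[X] × F[X]) :
    φ (twistedEval a x p) = twistedEval (φ a) (φ x) p := by
  simp only [twistedEval_apply, map_add, map_mul, aeval_algHom_apply]

theorem twistedEval_prodMk (a x : R) (b y : S) (p : F[X] × F[X]) :
    twistedEval (a, b) (x, y) p = (twistedEval a x p, twistedEval b y p) :=
  Prod.ext (map_twistedEval (AlgHom.fst F R S) _ _ p) (map_twistedEval (AlgHom.snd F R S) _ _ p)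

theorem exists_twistedEval_eq {m r : ℕ} {G : Type*} [Group G] {a x : G}
    (h : IsMetacyclicPair m r a x) (hm : m ≠ 0) (hgen : Subgroup.closure {a, x} = ⊤)
    (y : MonoidAlgebra F G) :
    ∃ p ∈ (degreeLT F m).prod (degreeLT F m),
      twistedEval (MonoidAlgebra.of F G a) (MonoidAlgebra.of F G x) p = y := by
  change y ∈ ((degreeLT F m).prod (degreeLT F m)).map (twistedEval _ _)
  induction y using MonoidAlgebra.induction_on with
  | of g =>
    obtain ⟨i, hi, hg⟩ := h.exists_eq_pow_or_eq_mul_pow hm hgen g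
    have hX : (X ^ i : F[X]) ∈ degreeLT F m :=
      mem_degreeLT.mpr ((degree_X_pow_le i).trans_lt (by exact_mod_cast hi))
    rcases hg with rfl | rfl
    · exact ⟨(X ^ i, 0), ⟨hX, zero_mem _⟩, by simp [twistedEval_apply]⟩
    · exact ⟨(0, X ^ i), ⟨zero_mem _, hX⟩, by simp [twistedEval_apply]⟩
  | add y z hy hz => exact add_mem hy hz
  | smul c y hy => exact Submodule.smul_mem _ c hy

end TwistedEval

section VanishesAt

variable {F : Type*} [CommSemiring F] {K : Type*} [Semiring K] [Algebra F K]

/-- The element `l` is a common zero of the two polynomials in the pair `p`. -/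
def VanishesAt (p : F[X] × F[X]) (l : K) : Prop :=
  aeval l p.1 = 0 ∧ aeval l p.2 = 0

theorem VanishesAt.map {L : Type*} [Semiring L] [Algebra F L] {p : F[X] × F[X]} {l : K}
    (h : VanishesAt p l) (φ : K →ₐ[F] L) : VanishesAt p (φ l) := by
  simp only [VanishesAt, aeval_algHom_apply, h.1, h.2, map_zero, and_self]

end VanishesAt

section Bijectivity

theorem bijective_of_surjective_of_injective_comp {F V A B : Type*} [DivisionRing F]
    [AddCommGroup V] [AddCommGroup A] [AddCommGroup B] [Module F V] [Module F A] [Module F B]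
    [FiniteDimensional F V] [FiniteDimensional F B] {ψ : V →ₗ[F] A} {φ : A →ₗ[F] B}
    (hψ : Function.Surjective ψ) (hcomp : Function.Injective (φ ∘ₗ ψ))
    (hdim : Module.finrank F V = Module.finrank F B) : Function.Bijective φ := by
  have comp_bijective : Function.Bijective (φ ∘ ψ) :=
    ⟨hcomp, (LinearMap.injective_iff_surjective_of_finrank_eq_finrank hdim).mp hcomp⟩
  exact (Function.Bijective.of_comp_iff φ ⟨comp_bijective.1.of_comp, hψ⟩).mp comp_bijective

variable {F : Type*} [Field F] {K : Type*} [Field K] [Algebra F K]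

theorem eq_zero_of_aeval_primitiveRoot_pow_eq_zero {m : ℕ} {z : K} (hz : IsPrimitiveRoot z m)
    {f : F[X]} (hf : f ∈ degreeLT F m) (h : ∀ i < m, aeval (z ^ i) f = 0) : f = 0 := by
  rw [← Polynomial.map_eq_zero (algebraMap F K)]
  refine eq_zero_of_degree_lt_of_eval_index_eq_zero (Finset.range m) hz.injOn_pow ?_ ?_
  · simpa [degree_map] using mem_degreeLT.mp hf
  · simpa using h

theorem bijective_of_forall_vanishesAt {m r : ℕ} {G : Type*} [Group G] {a x : G}
    (h : IsMetacyclicPair m r a x) (hgen : Subgroup.closure {a, x} = ⊤)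
    (hm : m ≠ 0) {z : K} (hz : IsPrimitiveRoot z m) {B : Type*} [Ring B] [Algebra F B]
    (hB : Module.finrank F B = 2 * m) (φ : MonoidAlgebra F G →ₐ[F] B)
    (hφ : ∀ p : F[X] × F[X],
      twistedEval (φ (MonoidAlgebra.of F G a)) (φ (MonoidAlgebra.of F G x)) p = 0 →
        ∀ i < m, VanishesAt p (z ^ i)) :
    Function.Bijective φ := by
  let e := degreeLTEquiv F m
  have : FiniteDimensional F B := Module.finite_of_finrank_pos (by rw [hB]; positivity)
  have : FiniteDimensional F (degreeLT F m) := Module.Finite.equiv e.symm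
  let ψ : degreeLT F m × degreeLT F m →ₗ[F] MonoidAlgebra F G :=
    twistedEval (MonoidAlgebra.of F G a) (MonoidAlgebra.of F G x) ∘ₗ
      (degreeLT F m).subtype.prodMap (degreeLT F m).subtype
  have hψ : Function.Surjective ψ := fun y => by
    obtain ⟨p, hp, rfl⟩ := exists_twistedEval_eq h hm hgen y
    exact ⟨(⟨p.1, hp.1⟩, ⟨p.2, hp.2⟩), rfl⟩
  refine bijective_of_surjective_of_injective_comp (φ := φ.toLinearMap) hψ ?_ ?_
  · rw [injective_iff_map_eq_zero]
    rintro ⟨⟨f, hf⟩, ⟨g, hg⟩⟩ hfg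
    have vanishes := hφ (f, g) (by rw [← map_twistedEval]; exact hfg)
    have hf0 := eq_zero_of_aeval_primitiveRoot_pow_eq_zero hz hf fun i hi => (vanishes i hi).1
    have hg0 := eq_zero_of_aeval_primitiveRoot_pow_eq_zero hz hg fun i hi => (vanishes i hi).2
    simp [hf0, hg0]
  · rw [Module.finrank_prod, e.finrank_eq, Module.finrank_fin_fun, hB, two_mul]

theorem nonempty_algEquiv_of_forall_vanishesAt {k : ℕ} {z : K}
    (hz : IsPrimitiveRoot z (2 ^ (k - 1))) {B : Type*} [Ring B] [Algebra F B]
    (hB : Module.finrank F B = 2 * 2 ^ (k - 1)) {a x : B}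
    (h : IsMetacyclicPair (2 ^ (k - 1)) (2 ^ (k - 2) - 1) a x)
    (hvanish : ∀ p : F[X] × F[X], twistedEval a x p = 0 →
      ∀ i < 2 ^ (k - 1), VanishesAt p (z ^ i)) :
    Nonempty (MonoidAlgebra F (PresentedGroup (qdRels k)) ≃ₐ[F] B) := by
  obtain ⟨φ, rfl, rfl⟩ := exists_algHom_of_isMetacyclicPair F h
  exact ⟨AlgEquiv.ofBijective φ <| bijective_of_forall_vanishesAt (isMetacyclicPair_of_qdRels k)
    (closure_of_qdRels k) (by positivity) hz hB φ hvanish⟩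

end Bijectivity

section Representations

open Matrix

variable {F : Type*} [Field F] {K : Type*} [Field K] [Algebra F K]

theorem aeval_mulVec_of_mulVec_eq_smul {n : Type*} [Fintype n] [DecidableEq n]
    {M : Matrix n n K} {v : n → K} {l : K} (h : M *ᵥ v = l • v) (f : F[X]) :
    aeval M f *ᵥ v = aeval l f • v := by
  induction f using Polynomial.induction_on with
  | C c => simp [Algebra.algebraMap_eq_smul_one, smul_mulVec]
  | add f g hf hg => simp only [map_add, add_mulVec, add_smul, hf, hg]
  | monomial i c ih =>
    rw [pow_succ, ← mul_assoc, aeval_mul, aeval_mul (x := l), aeval_X, aeval_X, ← mulVec_mulVec, h,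
      mulVec_smul, ih, smul_smul, mul_comm]

theorem vanishesAt_of_mulVec_eq_smul {n : Type*} [Fintype n] [DecidableEq n]
    {M S : Matrix n n K} {v : n → K} {l : K} (hM : M *ᵥ v = l • v)
    (hv : LinearIndependent K ![v, S *ᵥ v]) {p : F[X] × F[X]} (h : twistedEval M S p = 0) :
    VanishesAt p l := by
  refine LinearIndependent.pair_iff.mp hv _ _ ?_
  calc aeval l p.1 • v + aeval l p.2 • S *ᵥ v = twistedEval M S p *ᵥ v := by
        simp only [twistedEval_apply, add_mulVec, ← mulVec_mulVec,
          aeval_mulVec_of_mulVec_eq_smul hM, mulVec_smul]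
    _ = 0 := by rw [h, zero_mulVec]

theorem isMetacyclicPair_of_sq_eq_one {M : Type*} [CommMonoid M] {m r : ℕ} (hm : Even m)
    (hr : Odd r) {c e : M} (hc : c ^ 2 = 1) (he : e ^ 2 = 1) : IsMetacyclicPair m r c e where
  pow_eq_one := by
    obtain ⟨j, rfl⟩ := even_iff_exists_two_mul.mp hm
    rw [pow_mul, hc, one_pow]
  sq_eq_one := he
  conj_eq_pow := by
    obtain ⟨j, rfl⟩ := hr
    rw [pow_succ, pow_mul, hc, one_pow, one_mul, mul_right_comm, ← sq, he, one_mul]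

theorem vanishesAt_of_twistedEval_one_of_neg_one (h2 : (2 : F) ≠ 0) {c : F} {p : F[X] × F[X]}
    (hpos : twistedEval c 1 p = 0) (hneg : twistedEval c (-1) p = 0) : VanishesAt p c := by
  rw [twistedEval_apply] at hpos hneg
  have hf : 2 * aeval c p.1 = 0 := by linear_combination hpos + hneg
  have hg : 2 * aeval c p.2 = 0 := by linear_combination hpos - hneg
  exact ⟨(mul_eq_zero.mp hf).resolve_left h2, (mul_eq_zero.mp hg).resolve_left h2⟩

/-- The image of the involution `x` in each two-dimensional representation used below. -/
def swapMatrix (R : Type*) [Zero R] [One R] : Matrix (Fin 2) (Fin 2) R := !![0, 1; 1, 0]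

theorem swapMatrix_sq (R : Type*) [Semiring R] : swapMatrix R ^ 2 = 1 := by
  simp [swapMatrix, sq, one_fin_two]

theorem linearIndependent_swapMatrix_mulVec {s t : K} (hst : s ^ 2 ≠ t ^ 2) :
    LinearIndependent K ![![s, t], swapMatrix K *ᵥ ![s, t]] := by
  rw [LinearIndependent.pair_iff]
  intro c d hcd
  have h0 : c * s + d * t = 0 := by simpa [swapMatrix] using congrFun hcd 0
  have h1 : c * t + d * s = 0 := by simpa [swapMatrix] using congrFun hcd 1
  have hc : (s ^ 2 - t ^ 2) * c = 0 := by linear_combination s * h0 - t * h1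
  have hd : (s ^ 2 - t ^ 2) * d = 0 := by linear_combination s * h1 - t * h0
  have hne := sub_ne_zero.mpr hst
  exact ⟨(mul_eq_zero.mp hc).resolve_left hne, (mul_eq_zero.mp hd).resolve_left hne⟩

theorem diag_fin_two_pow {R : Type*} [Semiring R] (u w : R) (n : ℕ) :
    !![u, 0; 0, w] ^ n = !![u ^ n, 0; 0, w ^ n] := by
  induction n with
  | zero => simp [one_fin_two]
  | succ n ih => simp [pow_succ, ih]

theorem isMetacyclicPair_diagonal {R : Type*} [Semiring R] {m r : ℕ} {u w : R} (hu : u ^ m = 1)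
    (huw : u ^ r = w) (hwu : w ^ r = u) :
    IsMetacyclicPair m r !![u, 0; 0, w] (swapMatrix R) := by
  have hw : w ^ m = 1 := by rw [← huw, pow_right_comm, hu, one_pow]
  refine ⟨?_, swapMatrix_sq R, ?_⟩
  · rw [diag_fin_two_pow, hu, hw, one_fin_two]
  · simp [diag_fin_two_pow, huw, hwu, swapMatrix]

theorem vanishesAt_of_twistedEval_diagonal {u w : K} {p : F[X] × F[X]}
    (h : twistedEval !![u, 0; 0, w] (swapMatrix K) p = 0) :
    VanishesAt p u ∧ VanishesAt p w := by
  constructor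
  · exact vanishesAt_of_mulVec_eq_smul (v := ![1, 0]) (by simp [funext_iff, Fin.forall_fin_two])
      (linearIndependent_swapMatrix_mulVec (by simp)) h
  · exact vanishesAt_of_mulVec_eq_smul (v := ![0, 1]) (by simp [funext_iff, Fin.forall_fin_two])
      (linearIndependent_swapMatrix_mulVec (by simp)) h

/-- The transposed companion matrix of `X ^ 2 - t X + 1`. It realises over the field of `t` the
representation with eigenvalues `l` and `l⁻¹`, where `t = l + l⁻¹`. -/
def recipCompanion {R : Type*} [Ring R] (t : R) : Matrix (Fin 2) (Fin 2) R := !![0, 1; -1, t]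

theorem recipCompanion_mulVec {l : K} (hl : l ≠ 0) :
    recipCompanion (l + l⁻¹) *ᵥ ![1, l] = l • ![1, l] := by
  have second_entry : -1 + l * (l + l⁻¹) = l * l := by field_simp; ring
  simpa [recipCompanion, funext_iff, Fin.forall_fin_two] using second_entry

theorem recipCompanion_pow_eq_one {l : K} (hl0 : l ≠ 0) (hl : l ^ 2 ≠ 1) {n : ℕ}
    (hn : l ^ n = 1) : recipCompanion (l + l⁻¹) ^ n = 1 := by
  let P : Matrix (Fin 2) (Fin 2) K := !![1, 1; l, l⁻¹]
  have hP : IsUnit P := by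
    have det_ne_zero : l⁻¹ - l ≠ 0 :=
      sub_ne_zero.mpr fun h => hl (by simpa [h, sq] using mul_inv_cancel₀ hl0)
    simpa [P, isUnit_iff_isUnit_det, isUnit_iff_ne_zero] using det_ne_zero
  have diagonalizes : SemiconjBy P !![l, 0; 0, l⁻¹] (recipCompanion (l + l⁻¹)) := by
    simp [SemiconjBy, P, recipCompanion, add_mul, hl0]
  have h := (diagonalizes.pow_right n).eq
  rw [diag_fin_two_pow, inv_pow, hn, inv_one, ← one_fin_two, mul_one] at h
  exact hP.mul_eq_right.mp h.symm

section BaseChange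

variable {R S : Type*} [CommRing R] [Ring S] [Algebra R S]

theorem mapMatrix_swapMatrix :
    (Algebra.ofId R S).mapMatrix (swapMatrix R) = swapMatrix S := by
  simp [swapMatrix, ← Matrix.ext_iff, Fin.forall_fin_two]

theorem mapMatrix_recipCompanion (t : R) :
    (Algebra.ofId R S).mapMatrix (recipCompanion t) = recipCompanion (algebraMap R S t) := by
  simp [recipCompanion, Algebra.ofId_apply, ← Matrix.ext_iff, Fin.forall_fin_two]

end BaseChange

theorem isMetacyclicPair_recipCompanion {m r : ℕ} {t : F} {l : K}
    (ht : algebraMap F K t = l + l⁻¹) (hl : l ^ 2 ≠ 1) (hm : l ^ m = 1) (hr : l ^ (r + 1) = 1) :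
    IsMetacyclicPair m r (recipCompanion t) (swapMatrix F) := by
  have hl0 : l ≠ 0 := by
    rintro rfl
    simp at hr
  have pow_eq_one {n : ℕ} (hn : l ^ n = 1) : recipCompanion t ^ n = 1 := by
    apply map_injective (algebraMap F K).injective
    change (Algebra.ofId F K).mapMatrix _ = (Algebra.ofId F K).mapMatrix _
    rw [map_pow, mapMatrix_recipCompanion, ht, map_one, recipCompanion_pow_eq_one hl0 hl hn]
  have conj_mul_self : swapMatrix F * recipCompanion t * swapMatrix F * recipCompanion t = 1 := by
    simp [swapMatrix, recipCompanion, one_fin_two]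
  refine ⟨pow_eq_one hm, swapMatrix_sq F, ?_⟩
  exact left_inv_eq_right_inv conj_mul_self (by rw [← pow_succ', pow_eq_one hr])

theorem vanishesAt_of_twistedEval_recipCompanion {t : F} {l : K}
    (ht : algebraMap F K t = l + l⁻¹) (hl0 : l ≠ 0) (hl : l ^ 2 ≠ 1) {p : F[X] × F[X]}
    (h : twistedEval (recipCompanion t) (swapMatrix F) p = 0) :
    VanishesAt p l ∧ VanishesAt p l⁻¹ := by
  have vanishes {u : K} (hu : algebraMap F K t = u + u⁻¹) (hu0 : u ≠ 0) (hu1 : u ^ 2 ≠ 1) :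
      VanishesAt p u := by
    have hK : twistedEval (recipCompanion (u + u⁻¹)) (swapMatrix K) p = 0 := by
      rw [← hu, ← mapMatrix_recipCompanion, ← mapMatrix_swapMatrix (R := F), ← map_twistedEval, h,
        map_zero]
    exact vanishesAt_of_mulVec_eq_smul (recipCompanion_mulVec hu0)
      (linearIndependent_swapMatrix_mulVec (by simpa using hu1.symm)) hK
  exact ⟨vanishes ht hl0 hl,
    vanishes (by rw [ht, inv_inv, add_comm]) (inv_ne_zero hl0) (by rwa [inv_pow, inv_ne_one])⟩

end Representations

section FiniteField

theorem exists_isPrimitiveRoot_of_dvd_card_sub_one {K : Type*} [Field K] [Fintype K] {m : ℕ}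
    (hm : m ∣ Fintype.card K - 1) : ∃ z : K, IsPrimitiveRoot z m := by
  classical
  obtain ⟨g, hg⟩ := IsCyclic.exists_ofOrder_eq_natCard (α := Kˣ)
  rw [Nat.card_eq_fintype_card, Fintype.card_units] at hg
  obtain ⟨d, hd⟩ := hm
  have hpos : 0 < orderOf g := orderOf_pos g
  have hroot : IsPrimitiveRoot (g ^ d) m :=
    (IsPrimitiveRoot.orderOf g).pow hpos (by rw [hg, hd, mul_comm])
  exact ⟨_, hroot.map_of_injective (f := Units.coeHom K) Units.val_injective⟩

variable {F K : Type*} [Field F] [Fintype F] [Field K] [Fintype K] [Algebra F K]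

theorem finrank_eq_of_card_eq_pow {d : ℕ} (h : Fintype.card K = Fintype.card F ^ d) :
    Module.finrank F K = d :=
  Nat.pow_right_injective Fintype.one_lt_card (Module.card_eq_pow_finrank.symm.trans h)

theorem exists_isPrimitiveRoot_sixteen_frobenius_eq
    (h16 : Fintype.card F % 16 = 15 ∨ Fintype.card F % 16 = 9)
    (hK : Fintype.card K = Fintype.card F ^ 2) :
    ∃ z : K, IsPrimitiveRoot z 16 ∧ (FiniteField.frobeniusAlgHom F K z = z ^ 15 ∨
      FiniteField.frobeniusAlgHom F K z = z ^ 9) := by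
  have card_mod : Fintype.card K % 16 = 1 := by
    rcases h16 with h | h <;> rw [hK, Nat.pow_mod, h]
  obtain ⟨z, hz⟩ := exists_isPrimitiveRoot_of_dvd_card_sub_one (K := K) (m := 16) (by omega)
  have frobenius_z : FiniteField.frobeniusAlgHom F K z = z ^ (Fintype.card F % 16) :=
    pow_eq_pow_mod _ hz.pow_eq_one
  refine ⟨z, hz, ?_⟩
  rcases h16 with h | h <;> rw [h] at frobenius_z
  · exact .inl frobenius_z
  · exact .inr frobenius_z

end FiniteField

section Wedderburn

variable {F : Type*} [Field F] {K : Type*} [Field K] [Algebra F K]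

theorem exists_algebraMap_eq_of_finrank_prime (hK : (Module.finrank F K).Prime) {σ : K →ₐ[F] K}
    (hσ : σ ≠ AlgHom.id F K) {w : K} (hw : σ w = w) : ∃ t, algebraMap F K t = w := by
  have := Subalgebra.isSimpleOrder_of_finrank_prime F K hK
  have fixed_eq_bot : AlgHom.equalizer σ (AlgHom.id F K) = ⊥ :=
    (eq_bot_or_eq_top _).resolve_right (mt AlgHom.equalizer_eq_top.mp hσ)
  have w_fixed : w ∈ AlgHom.equalizer σ (AlgHom.id F K) := hw
  rwa [fixed_eq_bot, Algebra.mem_bot] at w_fixed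

theorem exists_algebraMap_eq_pow_add_inv (hK : (Module.finrank F K).Prime) {z : K}
    (hz : IsPrimitiveRoot z 16) {σ : K →ₐ[F] K} (hσ : σ z = z ^ 15 ∨ σ z = z ^ 9) (j : ℕ) :
    ∃ t, algebraMap F K t = z ^ (2 * j) + (z ^ (2 * j))⁻¹ := by
  have hne : σ ≠ AlgHom.id F K := by
    rintro rfl
    rcases hσ with h | h
    · exact absurd (hz.pow_inj (i := 1) (j := 15) (by simp) (by simp) (by simpa using h)) (by simp)
    · exact absurd (hz.pow_inj (i := 1) (j := 9) (by simp) (by simp) (by simpa using h)) (by simp)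
  refine exists_algebraMap_eq_of_finrank_prime hK hne ?_
  have hl : (z ^ (2 * j)) ^ 8 = 1 := by
    rw [← pow_mul, show 2 * j * 8 = 16 * j by ring, pow_mul, hz.pow_eq_one, one_pow]
  have hσl : σ (z ^ (2 * j)) = (z ^ (2 * j))⁻¹ ∨ σ (z ^ (2 * j)) = z ^ (2 * j) := by
    refine hσ.imp (fun h => ?_) (fun h => ?_)
    · rw [map_pow, h, pow_right_comm]
      exact eq_inv_of_mul_eq_one_left (by rw [← pow_succ, pow_mul _ 8 2, hl, one_pow])
    · rw [map_pow, h, pow_right_comm, pow_succ, hl, one_mul]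
  rw [map_add, map_inv₀]
  rcases hσl with h | h <;> rw [h]
  rw [inv_inv, add_comm]

theorem vanishesAt_pow_nine_and_pow_fifteen {p : F[X] × F[X]} {w : K} (hw : w ^ 16 = 1)
    {σ : K →ₐ[F] K} (hσ : σ w = w ^ 15 ∨ σ w = w ^ 9) (h : VanishesAt p w ∧ VanishesAt p (w ^ 7)) :
    VanishesAt p (w ^ 9) ∧ VanishesAt p (w ^ 15) := by
  have h₁ := h.1.map σ
  have h₇ := h.2.map σ
  rw [map_pow] at h₇
  rcases hσ with hσ | hσ <;> rw [hσ] at h₁ h₇ <;>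
    rw [← pow_mul, pow_eq_pow_mod _ hw] at h₇
  · exact ⟨h₇, h₁⟩
  · exact ⟨h₁, h₇⟩

/-- The image of the generator `a` of `QD32`: four characters, the representations with
eigenvalues `l` and `l⁻¹` for `l = z ^ 2, z ^ 4, z ^ 6`, where `t j` stands for
`z ^ (2 * j) + (z ^ (2 * j))⁻¹`, and those with eigenvalues `l` and `l ^ 7` for `l = z, z ^ 3`. -/
def wedderburnRotation (t : ℕ → F) (z : K) : F × F × F × F ×
    Matrix (Fin 2) (Fin 2) F × Matrix (Fin 2) (Fin 2) F × Matrix (Fin 2) (Fin 2) F ×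
    Matrix (Fin 2) (Fin 2) K × Matrix (Fin 2) (Fin 2) K :=
  (1, 1, -1, -1, recipCompanion (t 1), recipCompanion (t 2), recipCompanion (t 3),
    !![z, 0; 0, z ^ 7], !![z ^ 3, 0; 0, (z ^ 3) ^ 7])

variable (F K) in
/-- The image of the generator `x` of `QD32`, in the same nine representations as
`wedderburnRotation`. -/
def wedderburnReflection : F × F × F × F ×
    Matrix (Fin 2) (Fin 2) F × Matrix (Fin 2) (Fin 2) F × Matrix (Fin 2) (Fin 2) F ×
    Matrix (Fin 2) (Fin 2) K × Matrix (Fin 2) (Fin 2) K :=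
  (1, -1, 1, -1, swapMatrix F, swapMatrix F, swapMatrix F, swapMatrix K, swapMatrix K)

theorem isMetacyclicPair_wedderburn {t : ℕ → F} {z : K} (hz : IsPrimitiveRoot z 16)
    (ht : ∀ j, algebraMap F K (t j) = z ^ (2 * j) + (z ^ (2 * j))⁻¹) :
    IsMetacyclicPair 16 7 (wedderburnRotation t z) (wedderburnReflection F K) := by
  have character {c e : F} (hc : c ^ 2 = 1) (he : e ^ 2 = 1) : IsMetacyclicPair 16 7 c e :=
    isMetacyclicPair_of_sq_eq_one (by decide) (by decide) hc he
  have companion (j : ℕ) (hj : ¬16 ∣ 2 * j * 2) :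
      IsMetacyclicPair 16 7 (recipCompanion (t j)) (swapMatrix F) := by
    refine isMetacyclicPair_recipCompanion (ht j) ?_ ?_ ?_ <;> rw [← pow_mul]
    · rwa [Ne, hz.pow_eq_one_iff_dvd]
    all_goals rw [hz.pow_eq_one_iff_dvd]; omega
  have diagonal {w : K} (hw : w ^ 16 = 1) :
      IsMetacyclicPair 16 7 !![w, 0; 0, w ^ 7] (swapMatrix K) :=
    isMetacyclicPair_diagonal hw rfl (by rw [← pow_mul, pow_eq_pow_mod _ hw, pow_one])
  have hz3 : (z ^ 3) ^ 16 = 1 := by rw [pow_right_comm, hz.pow_eq_one, one_pow]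
  exact (character (by simp) (by simp)).prodMk <| (character (by simp) (by simp)).prodMk <|
    (character (by simp) (by simp)).prodMk <| (character (by simp) (by simp)).prodMk <|
    (companion 1 (by decide)).prodMk <| (companion 2 (by decide)).prodMk <|
    (companion 3 (by decide)).prodMk <| (diagonal hz.pow_eq_one).prodMk (diagonal hz3)

theorem natCast_ne_zero_of_isPrimitiveRoot {n : ℕ} [NeZero n] {z : K} (hz : IsPrimitiveRoot z n) :
    (n : F) ≠ 0 := by
  have := hz.neZero'
  rw [← (algebraMap F K).injective.ne_iff, map_natCast, map_zero]
  exact NeZero.ne _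

theorem vanishesAt_even_pow_of_twistedEval_wedderburn {t : ℕ → F} {z : K}
    (hz : IsPrimitiveRoot z 16)
    (ht : ∀ j, algebraMap F K (t j) = z ^ (2 * j) + (z ^ (2 * j))⁻¹) {p : F[X] × F[X]}
    (h : twistedEval (wedderburnRotation t z) (wedderburnReflection F K) p = 0) {i : ℕ}
    (hi : i < 16) (heven : Even i) : VanishesAt p (z ^ i) := by
  simp only [wedderburnRotation, wedderburnReflection, twistedEval_prodMk, Prod.mk_eq_zero] at h
  obtain ⟨h_one, h_one', h_neg_one, h_neg_one', h_two, h_four, h_six, -, -⟩ := h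
  have h2 : (2 : F) ≠ 0 := fun h2 => natCast_ne_zero_of_isPrimitiveRoot (F := F) hz <| by
    rw [show 16 = 2 * 8 by norm_num, Nat.cast_mul, Nat.cast_two, h2, zero_mul]
  have hz8 : z ^ 8 = -1 :=
    (hz.pow (by norm_num) (show 16 = 8 * 2 by norm_num)).eq_neg_one_of_two_right
  have character {c : F} (hpos : twistedEval c 1 p = 0) (hneg : twistedEval c (-1) p = 0) :
      VanishesAt p (algebraMap F K c) :=
    (vanishesAt_of_twistedEval_one_of_neg_one h2 hpos hneg).map (Algebra.ofId F K)
  have companion {j : ℕ} (hj : ¬16 ∣ 2 * j * 2) (hj8 : 2 * j < 16)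
      (h : twistedEval (recipCompanion (t j)) (swapMatrix F) p = 0) :
      VanishesAt p (z ^ (2 * j)) ∧ VanishesAt p (z ^ (16 - 2 * j)) := by
    have hinv : (z ^ (2 * j))⁻¹ = z ^ (16 - 2 * j) := by
      apply inv_eq_of_mul_eq_one_right
      rw [← pow_add, Nat.add_sub_cancel' hj8.le, hz.pow_eq_one]
    rw [← hinv]
    refine vanishesAt_of_twistedEval_recipCompanion (ht j)
      (pow_ne_zero _ (hz.ne_zero (by norm_num))) ?_ h
    rwa [← pow_mul, Ne, hz.pow_eq_one_iff_dvd]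
  obtain ⟨v2, v14⟩ := companion (by decide) (by decide) h_two
  obtain ⟨v4, v12⟩ := companion (by decide) (by decide) h_four
  obtain ⟨v6, v10⟩ := companion (by decide) (by decide) h_six
  have v0 : VanishesAt p (z ^ 0) := by simpa using character h_one h_one'
  have v8 : VanishesAt p (z ^ 8) := by
    simpa [hz8] using character h_neg_one h_neg_one'
  interval_cases i <;> first | assumption | exact absurd heven (by decide)

theorem vanishesAt_odd_pow_of_twistedEval_wedderburn {t : ℕ → F} {z : K} (hz : z ^ 16 = 1)
    {σ : K →ₐ[F] K} (hσ : σ z = z ^ 15 ∨ σ z = z ^ 9) {p : F[X] × F[X]}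
    (h : twistedEval (wedderburnRotation t z) (wedderburnReflection F K) p = 0) {i : ℕ}
    (hi : i < 16) (hodd : Odd i) : VanishesAt p (z ^ i) := by
  simp only [wedderburnRotation, wedderburnReflection, twistedEval_prodMk, Prod.mk_eq_zero] at h
  obtain ⟨-, -, -, -, -, -, -, h_z, h_z3⟩ := h
  have hσ3 : σ (z ^ 3) = (z ^ 3) ^ 15 ∨ σ (z ^ 3) = (z ^ 3) ^ 9 := by
    rw [map_pow, pow_right_comm z 3 15, pow_right_comm z 3 9]
    exact hσ.imp (congrArg (· ^ 3)) (congrArg (· ^ 3))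
  have hz3 : (z ^ 3) ^ 16 = 1 := by rw [pow_right_comm, hz, one_pow]
  have hv := vanishesAt_of_twistedEval_diagonal h_z
  have hv3 := vanishesAt_of_twistedEval_diagonal h_z3
  obtain ⟨v9, v15⟩ := vanishesAt_pow_nine_and_pow_fifteen hz hσ hv
  obtain ⟨v11, v13⟩ := vanishesAt_pow_nine_and_pow_fifteen hz3 hσ3 hv3
  obtain ⟨v1, v7⟩ := hv
  obtain ⟨v3, v5⟩ := hv3
  rw [← pow_one z] at v1
  rw [← pow_mul, pow_eq_pow_mod _ hz] at v5 v11 v13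
  interval_cases i <;> first | assumption | exact absurd hodd (by decide)

end Wedderburn

theorem groupAlgebra_QD32_wedderburn_neg_one_seven_general {F K : Type*} [Field F] [Field K]
    [Algebra F K] (hK : Module.finrank F K = 2) {z : K} (hz : IsPrimitiveRoot z 16) {σ : K →ₐ[F] K}
    (hσ : σ z = z ^ 15 ∨ σ z = z ^ 9) :
    Nonempty (MonoidAlgebra F QD32 ≃ₐ[F]
      (F × F × F × F ×
        Matrix (Fin 2) (Fin 2) F × Matrix (Fin 2) (Fin 2) F × Matrix (Fin 2) (Fin 2) F ×
        Matrix (Fin 2) (Fin 2) K × Matrix (Fin 2) (Fin 2) K)) := by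
  choose t ht using exists_algebraMap_eq_pow_add_inv (hK ▸ Nat.prime_two) hz hσ
  have : FiniteDimensional F K := Module.finite_of_finrank_pos (by rw [hK]; norm_num)
  have : Module.Finite F (Matrix (Fin 2) (Fin 2) K) := Module.Finite.trans K _
  have hdim : Module.finrank F (F × F × F × F ×
      Matrix (Fin 2) (Fin 2) F × Matrix (Fin 2) (Fin 2) F × Matrix (Fin 2) (Fin 2) F ×
      Matrix (Fin 2) (Fin 2) K × Matrix (Fin 2) (Fin 2) K) = 32 := by
    simp [Module.finrank_prod, Module.finrank_matrix, hK]
  refine nonempty_algEquiv_of_forall_vanishesAt (k := 5) hz hdim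
    (isMetacyclicPair_wedderburn hz ht) fun p hp i hi => ?_
  rcases i.even_or_odd with heven | hodd
  · exact vanishesAt_even_pow_of_twistedEval_wedderburn hz ht hp hi heven
  · exact vanishesAt_odd_pow_of_twistedEval_wedderburn hz.pow_eq_one hσ hp hi hodd

/-- For `q ≡ -1, -7 (mod 16)` (i.e. `q % 16 = 15` or `q % 16 = 9`),
`F_q[QD_32] ≅ F_q⁴ ⊕ M(2,F_q)³ ⊕ M(2,F_{q²})²`. -/
theorem groupAlgebra_QD32_wedderburn_neg_one_seven (F : Type) [Field F] [Fintype F]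
    (p n : ℕ) [Fact p.Prime] (hp : Odd p) [CharP F p]
    (hn : 0 < n) (hq : Fintype.card F = p ^ n)
    (h16 : Fintype.card F % 16 = 15 ∨ Fintype.card F % 16 = 9)
    (K : Type) [Field K] [Fintype K] [Algebra F K]
    (hK : Fintype.card K = Fintype.card F ^ 2) :
    Nonempty (MonoidAlgebra F QD32 ≃ₐ[F]
      (F × F × F × F ×
        Matrix (Fin 2) (Fin 2) F × Matrix (Fin 2) (Fin 2) F × Matrix (Fin 2) (Fin 2) F ×
        Matrix (Fin 2) (Fin 2) K × Matrix (Fin 2) (Fin 2) K)) := by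
  obtain ⟨z, hz, hσ⟩ := exists_isPrimitiveRoot_sixteen_frobenius_eq h16 hK
  exact groupAlgebra_QD32_wedderburn_neg_one_seven_general (finrank_eq_of_card_eq_pow hK) hz hσ
end
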